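/- arXiv:0712.1514 — 2 statements merged into one kernel-verified Lean document; each statement's English description precedes it below -/
import Mathlib

section
/- Assume (H1) and (H2). For every ε ∈ (0,1) there exists C_ε > 0 such that for all f ∈ C₀^∞(ℍ; ℂ): ∫_ℍ b |f|² dv ≤ (1 + ε/2) q_A(f) + C_ε ‖f‖²_{L²(ℍ,dv)}. -/
open MeasureTheory Real Filter

noncomputable section

/-- The upper half-plane ℍ as a subset of ℝ². -/
def UHP : Set (ℝ × ℝ) := {p : ℝ × ℝ | 0 < p.2}

/-- The hyperbolic measure `dv = y⁻² dx dy` on ℍ. -/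
def volH : Measure (ℝ × ℝ) :=
  (volume.restrict UHP).withDensity fun p => ENNReal.ofReal ((p.2 ^ 2)⁻¹)

/-- x-derivative of a complex function on ℝ². -/
def dX (f : ℝ × ℝ → ℂ) (p : ℝ × ℝ) : ℂ := fderiv ℝ f p (1, 0)

/-- y-derivative of a complex function on ℝ². -/
def dY (f : ℝ × ℝ → ℂ) (p : ℝ × ℝ) : ℂ := fderiv ℝ f p (0, 1)

/-- x-derivative of a real function on ℝ². -/
def dXr (f : ℝ × ℝ → ℝ) (p : ℝ × ℝ) : ℝ := fderiv ℝ f p (1, 0)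

/-- y-derivative of a real function on ℝ². -/
def dYr (f : ℝ × ℝ → ℝ) (p : ℝ × ℝ) : ℝ := fderiv ℝ f p (0, 1)

/-- The magnetic field `b̃ = y² (∂ₓA₂ - ∂_yA₁)`. -/
def fieldB (A₁ A₂ : ℝ × ℝ → ℝ) (p : ℝ × ℝ) : ℝ := p.2 ^ 2 * (dXr A₂ p - dYr A₁ p)

/-- The magnetic intensity `b = |b̃|`. -/
def intenB (A₁ A₂ : ℝ × ℝ → ℝ) (p : ℝ × ℝ) : ℝ := |fieldB A₁ A₂ p|

/-- Smooth compactly supported test functions with support inside a set `Ω`. -/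
def IsTestOn (Ω : Set (ℝ × ℝ)) (f : ℝ × ℝ → ℂ) : Prop :=
  ContDiff ℝ (⊤ : ℕ∞) f ∧ HasCompactSupport f ∧ tsupport f ⊆ Ω

/-- The quadratic form of the magnetic Laplacian on ℍ. -/
def qA (A₁ A₂ : ℝ × ℝ → ℝ) (f : ℝ × ℝ → ℂ) : ℝ :=
  ∫ p, p.2 ^ 2 * (‖-Complex.I * dX f p - (A₁ p : ℂ) * f p‖ ^ 2 +
    ‖-Complex.I * dY f p - (A₂ p : ℂ) * f p‖ ^ 2) ∂volH

/-- hyperbolic distance from `(x,y)` to `(0,1)`. -/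
def hDist (p : ℝ × ℝ) : ℝ :=
  2 * Real.arsinh (Real.sqrt (p.1 ^ 2 + (p.2 - 1) ^ 2) / (2 * Real.sqrt p.2))

/-- (H1) : the magnetic intensity tends to +∞ at infinity. -/
def H1 (A₁ A₂ : ℝ × ℝ → ℝ) : Prop :=
  ∀ M : ℝ, ∃ R : ℝ, ∀ p ∈ UHP, R ≤ hDist p → M ≤ intenB A₁ A₂ p

/-- (H2) : control of the derivative of the magnetic field. -/
def H2 (C₀ : ℝ) (A₁ A₂ : ℝ × ℝ → ℝ) : Prop :=
  ∀ p ∈ UHP, p.2 * Real.sqrt ((dXr (fieldB A₁ A₂) p) ^ 2 + (dYr (fieldB A₁ A₂) p) ^ 2)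
    ≤ C₀ * (intenB A₁ A₂ p + 1)

/-- Counting function of a quadratic form `q` with form domain `dom` and squared
norm `nsq`, via Glazman's lemma. -/
def NN (q : (ℝ × ℝ → ℂ) → ℝ) (dom : Set (ℝ × ℝ → ℂ)) (nsq : (ℝ × ℝ → ℂ) → ℝ)
    (lam : ℝ) : ℕ :=
  sSup {n : ℕ | ∃ V : Submodule ℂ (ℝ × ℝ → ℂ), (V : Set (ℝ × ℝ → ℂ)) ⊆ dom ∧
    Module.finrank ℂ V = n ∧ ∀ u ∈ V, u ≠ 0 → q u < lam * nsq u}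

/-- Heaviside function `[ρ]₊⁰`. -/
def heav (ρ : ℝ) : ℝ := if 0 < ρ then 1 else 0


/-!
With `P₁ = -i∂ₓ - A₁` and `P₂ = -i∂_y - A₂`, the current `Jₖ = Re (f̄ Pₖ f)` satisfies
`curl J = 2 Re (conj (i P₁ f) P₂ f) - (curl A) |f|²`. Weight `J` by the smoothed sign
`s = b̃ / √(1 + b̃²)`, for which `|s| ≤ 1` and `s b̃ ≥ b - 1`. Since `s J` has compact support,
`∫ curl (s J) dx dy = 0`, so `∫ b |f|² dv` is controlled by the cross term, which
Cauchy–Schwarz bounds by `q_A(f)`, and by the terms `∇s · J`. As `|s'(t)| (|t| + 1) ≤ 2`,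
(H2) gives `y |∇s| ≤ 2 C₀`, and Young's inequality absorbs these terms into
`ε/2 q_A(f) + (2 C₀² / ε) ‖f‖²`.
-/

open scoped InnerProductSpace

section TestFunctionCalculus

variable {E F : Type*} [NormedAddCommGroup E] [NormedSpace ℝ E]
  [NormedAddCommGroup F] [NormedSpace ℝ F]

lemma contDiff_of_tsupport_subset {n : WithTop ℕ∞} {U : Set E} {g : E → F} (hU : IsOpen U)
    (hg : ContDiffOn ℝ n g U) (hgU : tsupport g ⊆ U) : ContDiff ℝ n g :=
  (contMDiff_of_tsupport fun _ hx =>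
    (hg.contDiffAt (hU.mem_nhds (hgU hx))).contMDiffAt).contDiff

lemma integrable_fderiv_apply [MeasurableSpace E] [OpensMeasurableSpace E] {μ : Measure E}
    [IsFiniteMeasureOnCompacts μ] {g : E → F} (hg : ContDiff ℝ 1 g) (hgc : HasCompactSupport g)
    (v : E) : Integrable (fun x => fderiv ℝ g x v) μ :=
  ((hg.continuous_fderiv one_ne_zero).clm_apply continuous_const).integrable_of_hasCompactSupport
    (hgc.fderiv_apply ℝ v)

lemma integral_fderiv_apply_eq_zero [FiniteDimensional ℝ E] [MeasurableSpace E] [BorelSpace E]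
    {μ : Measure E} [μ.IsAddHaarMeasure] {g : E → F} (hg : ContDiff ℝ 1 g)
    (hgc : HasCompactSupport g) (v : E) : ∫ x, fderiv ℝ g x v ∂μ = 0 := by
  have hg_int : Integrable g μ := hg.continuous.integrable_of_hasCompactSupport hgc
  simpa using integral_smul_fderiv_eq_neg_fderiv_smul_of_integrable (𝕜 := ℝ) (f := fun _ => 1)
    (v := v) (by simp) (by simpa using integrable_fderiv_apply hg hgc v) (by simpa using hg_int)
    (fun _ _ => by fun_prop) (fun x _ => hg.differentiable_one x)

end TestFunctionCalculus

section InnerProductEstimates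

variable {F : Type*} [NormedAddCommGroup F] [InnerProductSpace ℝ F]

lemma mul_inner_le_add_sq {ε : ℝ} (hε : 0 < ε) (r : ℝ) (x y : F) :
    r * ⟪x, y⟫_ℝ ≤ ε / 2 * ‖y‖ ^ 2 + r ^ 2 / (2 * ε) * ‖x‖ ^ 2 := by
  have hsq : ‖ε • y - r • x‖ ^ 2 = ε ^ 2 * ‖y‖ ^ 2 - 2 * ε * (r * ⟪x, y⟫_ℝ) + r ^ 2 * ‖x‖ ^ 2 := by
    rw [norm_sub_sq_real, norm_smul, norm_smul, real_inner_smul_left, real_inner_smul_right,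
      real_inner_comm, mul_pow, mul_pow, Real.norm_eq_abs, Real.norm_eq_abs, sq_abs, sq_abs]
    ring
  rw [← sub_nonneg]
  calc 0 ≤ ‖ε • y - r • x‖ ^ 2 / (2 * ε) := by positivity
    _ = _ := by rw [hsq]; field_simp; ring

lemma two_mul_mul_inner_le_add_sq {r : ℝ} (hr : |r| ≤ 1) (x y : F) :
    2 * (r * ⟪x, y⟫_ℝ) ≤ ‖x‖ ^ 2 + ‖y‖ ^ 2 := by
  have hr2 : r ^ 2 * ‖x‖ ^ 2 ≤ ‖x‖ ^ 2 :=
    mul_le_of_le_one_left (sq_nonneg _) ((sq_le_one_iff_abs_le_one r).2 hr)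
  linarith [mul_inner_le_add_sq one_pos r x y]

end InnerProductEstimates

section SmoothSign

/-- A smooth approximation `t / √(1 + t²)` of the sign function. The trigonometric form makes its
bound and its derivative immediate. -/
def smoothSign (t : ℝ) : ℝ := sin (arctan t)

lemma contDiff_smoothSign {n : WithTop ℕ∞} : ContDiff ℝ n smoothSign :=
  contDiff_sin.comp contDiff_arctan

lemma abs_smoothSign_le_one (t : ℝ) : |smoothSign t| ≤ 1 := abs_sin_le_one _

lemma abs_sub_one_le_smoothSign_mul (t : ℝ) : |t| - 1 ≤ smoothSign t * t := by
  have hr : 0 < √(1 + t ^ 2) := by positivity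
  have abs_le_r : |t| ≤ √(1 + t ^ 2) := abs_le_sqrt (by linarith)
  have r_le : √(1 + t ^ 2) ≤ 1 + |t| :=
    (sqrt_le_left (by positivity)).2 (by nlinarith [sq_abs t, abs_nonneg t])
  rw [smoothSign, sin_arctan, div_mul_eq_mul_div, le_div_iff₀ hr]
  nlinarith [sq_abs t]

lemma abs_deriv_smoothSign_mul_le (t : ℝ) : |deriv smoothSign t| * (|t| + 1) ≤ 2 := by
  have hderiv : deriv smoothSign t = cos (arctan t) * (1 / (1 + t ^ 2)) :=
    (hasDerivAt_arctan t).sin.deriv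
  calc |deriv smoothSign t| * (|t| + 1) ≤ 1 * (1 / (1 + t ^ 2)) * (|t| + 1) := by
        rw [hderiv, abs_mul, abs_of_pos (a := 1 / (1 + t ^ 2)) (by positivity)]
        gcongr
        exact abs_cos_le_one _
    _ ≤ 2 := by
        rw [one_mul, one_div_mul_eq_div, div_le_iff₀ (by positivity)]
        nlinarith [sq_abs t, sq_nonneg (|t| - 1)]

end SmoothSign

section MagneticCurrent

variable {E : Type*} [NormedAddCommGroup E] [NormedSpace ℝ E]
  {U : Set E} {A B s : E → ℝ} {f : E → ℂ} {p : E}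

/-- The magnetic momentum `(-i∂ᵥ - A) f` in the direction `v`, where the real function `A` is the
component along `v` of the magnetic potential. -/
def magneticDeriv (A : E → ℝ) (v : E) (f : E → ℂ) (p : E) : ℂ :=
  -Complex.I * fderiv ℝ f p v - (A p : ℂ) * f p

/-- The component along `v` of the gauge-invariant current `Re (f̄ · (-i∂ᵥ - A) f)`, written with
the real inner product of `ℂ`. -/
def magneticCurrent (A : E → ℝ) (v : E) (f : E → ℂ) (p : E) : ℝ :=
  ⟪f p, magneticDeriv A v f p⟫_ℝ

/-- The curl `∂ᵥ B - ∂_w A` in the plane spanned by `v` and `w` of a vector field whose components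
along `v` and `w` are `A` and `B`. -/
def curlAlong (v w : E) (A B : E → ℝ) (p : E) : ℝ := fderiv ℝ B p v - fderiv ℝ A p w

lemma magneticDeriv_of_notMem_tsupport (A : E → ℝ) (v : E) (hp : p ∉ tsupport f) :
    magneticDeriv A v f p = 0 := by
  simp [magneticDeriv, image_eq_zero_of_notMem_tsupport hp, fderiv_of_notMem_tsupport ℝ hp]

lemma tsupport_mul_magneticCurrent_subset (s A : E → ℝ) (v : E) (f : E → ℂ) :
    tsupport (s * magneticCurrent A v f) ⊆ tsupport f :=
  closure_mono fun p hp hfp => hp (by simp [magneticCurrent, hfp])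

lemma contDiffOn_magneticDeriv (hU : IsOpen U) (hf : ContDiffOn ℝ 2 f U)
    (hA : ContDiffOn ℝ 1 A U) (v : E) : ContDiffOn ℝ 1 (magneticDeriv A v f) U :=
  (contDiffOn_const.mul ((hf.fderiv_of_isOpen hU one_add_one_eq_two.le).clm_apply
    contDiffOn_const)).sub ((Complex.ofRealCLM.contDiff.comp_contDiffOn hA).mul
      (hf.of_le one_le_two))

lemma contDiffOn_magneticCurrent (hU : IsOpen U) (hf : ContDiffOn ℝ 2 f U)
    (hA : ContDiffOn ℝ 1 A U) (v : E) : ContDiffOn ℝ 1 (magneticCurrent A v f) U :=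
  (hf.of_le one_le_two).inner ℝ (contDiffOn_magneticDeriv hU hf hA v)

lemma continuous_curlAlong (v w : E) (hA : ContDiff ℝ 1 A) (hB : ContDiff ℝ 1 B) :
    Continuous (curlAlong v w A B) :=
  ((hB.continuous_fderiv one_ne_zero).clm_apply continuous_const).sub
    ((hA.continuous_fderiv one_ne_zero).clm_apply continuous_const)

lemma curlAlong_of_notMem_tsupport (v w : E) (hpA : p ∉ tsupport A) (hpB : p ∉ tsupport B) :
    curlAlong v w A B p = 0 := by
  simp [curlAlong, fderiv_of_notMem_tsupport ℝ hpA, fderiv_of_notMem_tsupport ℝ hpB]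

lemma integral_curlAlong_eq_zero [FiniteDimensional ℝ E] [MeasurableSpace E] [BorelSpace E]
    {μ : Measure E} [μ.IsAddHaarMeasure] (v w : E) (hA : ContDiff ℝ 1 A)
    (hAc : HasCompactSupport A) (hB : ContDiff ℝ 1 B) (hBc : HasCompactSupport B) :
    ∫ p, curlAlong v w A B p ∂μ = 0 := by
  simp_rw [curlAlong]
  rw [integral_sub (integrable_fderiv_apply hB hBc v) (integrable_fderiv_apply hA hAc w),
    integral_fderiv_apply_eq_zero hB hBc, integral_fderiv_apply_eq_zero hA hAc, sub_zero]

lemma curlAlong_mul (v w : E) (hs : DifferentiableAt ℝ s p) (hA : DifferentiableAt ℝ A p)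
    (hB : DifferentiableAt ℝ B p) :
    curlAlong v w (s * A) (s * B) p =
      s p * curlAlong v w A B p + (fderiv ℝ s p v * B p - fderiv ℝ s p w * A p) := by
  simp only [curlAlong, fderiv_mul hs hA, fderiv_mul hs hB, add_apply,
    smul_apply, smul_eq_mul]
  ring

lemma differentiableAt_fderiv_apply (hf : ContDiffAt ℝ 2 f p) (v : E) :
    DifferentiableAt ℝ (fun q => fderiv ℝ f q v) p :=
  ((hf.fderiv_right one_add_one_eq_two.le).differentiableAt one_ne_zero).clm_apply
    (differentiableAt_const v)

lemma differentiableAt_magneticDeriv (hf : ContDiffAt ℝ 2 f p) (hA : DifferentiableAt ℝ A p)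
    (v : E) : DifferentiableAt ℝ (magneticDeriv A v f) p :=
  ((differentiableAt_const _).mul (differentiableAt_fderiv_apply hf v)).sub
    ((Complex.ofRealCLM.differentiableAt.comp p hA).mul (hf.differentiableAt two_ne_zero))

lemma fderiv_magneticDeriv_apply (hf : ContDiffAt ℝ 2 f p) (hA : DifferentiableAt ℝ A p)
    (v w : E) :
    fderiv ℝ (magneticDeriv A v f) p w = -Complex.I * fderiv ℝ (fderiv ℝ f) p w v
      - (A p * fderiv ℝ f p w + fderiv ℝ A p w * f p) := by
  have hdf : HasFDerivAt (fun q => fderiv ℝ f q v) ((fderiv ℝ (fderiv ℝ f) p).flip v) p := by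
    simpa using ((hf.fderiv_right one_add_one_eq_two.le).differentiableAt
      one_ne_zero).hasFDerivAt.clm_apply (hasFDerivAt_const v p)
  have hAf := (Complex.ofRealCLM.hasFDerivAt.comp p hA.hasFDerivAt).mul
    (hf.differentiableAt two_ne_zero).hasFDerivAt
  have hP : fderiv ℝ (magneticDeriv A v f) p = _ :=
    ((hdf.const_mul (-Complex.I)).sub hAf).fderiv
  rw [hP]
  simp [mul_comm]

lemma curlAlong_magneticCurrent (v w : E) (hf : ContDiffAt ℝ 2 f p)
    (hA : DifferentiableAt ℝ A p) (hB : DifferentiableAt ℝ B p) :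
    curlAlong v w (magneticCurrent A v f) (magneticCurrent B w f) p =
      2 * ⟪Complex.I * magneticDeriv A v f p, magneticDeriv B w f p⟫_ℝ
        - curlAlong v w A B p * ‖f p‖ ^ 2 := by
  have hf1 : DifferentiableAt ℝ f p := hf.differentiableAt two_ne_zero
  have hsymm : fderiv ℝ (fderiv ℝ f) p v w = fderiv ℝ (fderiv ℝ f) p w v :=
    hf.isSymmSndFDerivAt (by simp) v w
  unfold curlAlong magneticCurrent
  rw [fderiv_inner_apply ℝ hf1 (differentiableAt_magneticDeriv hf hB w),
    fderiv_inner_apply ℝ hf1 (differentiableAt_magneticDeriv hf hA v),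
    fderiv_magneticDeriv_apply hf hB, fderiv_magneticDeriv_apply hf hA, hsymm,
    Complex.sq_norm, Complex.normSq_apply]
  simp only [magneticDeriv, Complex.inner, map_mul, map_sub, map_neg, Complex.conj_I,
    Complex.conj_ofReal, Complex.mul_re, Complex.mul_im, Complex.add_re, Complex.add_im,
    Complex.sub_re, Complex.sub_im, Complex.neg_re, Complex.neg_im, Complex.conj_re,
    Complex.conj_im, Complex.ofReal_re, Complex.ofReal_im, Complex.I_re, Complex.I_im]
  ring

lemma mul_curlAlong_mul_sq_norm_le (v w : E) {ε : ℝ} (hε : 0 < ε) (hf : ContDiffAt ℝ 2 f p)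
    (hA : DifferentiableAt ℝ A p) (hB : DifferentiableAt ℝ B p) (hs : DifferentiableAt ℝ s p)
    (hs1 : |s p| ≤ 1) :
    s p * curlAlong v w A B p * ‖f p‖ ^ 2 ≤
      (1 + ε / 2) * (‖magneticDeriv A v f p‖ ^ 2 + ‖magneticDeriv B w f p‖ ^ 2)
        + (fderiv ℝ s p v ^ 2 + fderiv ℝ s p w ^ 2) / (2 * ε) * ‖f p‖ ^ 2
        - curlAlong v w (s * magneticCurrent A v f) (s * magneticCurrent B w f) p := by
  have hf1 : DifferentiableAt ℝ f p := hf.differentiableAt two_ne_zero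
  have hcurl : curlAlong v w (s * magneticCurrent A v f) (s * magneticCurrent B w f) p =
      s p * curlAlong v w (magneticCurrent A v f) (magneticCurrent B w f) p
        + (fderiv ℝ s p v * ⟪f p, magneticDeriv B w f p⟫_ℝ
          - fderiv ℝ s p w * ⟪f p, magneticDeriv A v f p⟫_ℝ) :=
    curlAlong_mul v w hs (hf1.inner ℝ (differentiableAt_magneticDeriv hf hA v))
      (hf1.inner ℝ (differentiableAt_magneticDeriv hf hB w))
  have hcross := two_mul_mul_inner_le_add_sq hs1 (Complex.I * magneticDeriv A v f p)
    (magneticDeriv B w f p)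
  have hgrad_v := mul_inner_le_add_sq hε (fderiv ℝ s p v) (f p) (magneticDeriv B w f p)
  have hgrad_w := mul_inner_le_add_sq hε (-fderiv ℝ s p w) (f p) (magneticDeriv A v f p)
  rw [curlAlong_magneticCurrent v w hf hA hB] at hcurl
  rw [norm_mul, Complex.norm_I, one_mul] at hcross
  rw [neg_sq] at hgrad_w
  rw [hcurl, add_div, add_mul]
  linarith

end MagneticCurrent

section HyperbolicMeasure

variable {K : Set (ℝ × ℝ)} {g A₁ A₂ : ℝ × ℝ → ℝ}

lemma isOpen_UHP : IsOpen UHP := isOpen_lt continuous_const continuous_snd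

lemma measurable_hyperbolicDensity :
    Measurable fun p : ℝ × ℝ => ENNReal.ofReal ((p.2 ^ 2)⁻¹) := by fun_prop

lemma ae_volH_mem_UHP : ∀ᵐ p ∂volH, p ∈ UHP :=
  (withDensity_absolutelyContinuous _ _).ae_le (ae_restrict_mem isOpen_UHP.measurableSet)

lemma integral_sq_mul_volH (g : ℝ × ℝ → ℝ) : ∫ p, p.2 ^ 2 * g p ∂volH = ∫ p in UHP, g p := by
  rw [volH, integral_withDensity_eq_integral_toReal_smul measurable_hyperbolicDensity (by simp)]
  refine setIntegral_congr_fun isOpen_UHP.measurableSet fun p (hp : 0 < p.2) => ?_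
  simp only [smul_eq_mul]
  rw [ENNReal.toReal_ofReal (by positivity), inv_mul_cancel_left₀ (by positivity)]

lemma integrable_volH_of_continuousOn (hK : IsCompact K) (hKU : K ⊆ UHP)
    (hg : ContinuousOn g UHP) (hgK : ∀ p ∉ K, g p = 0) : Integrable g volH := by
  have hdensity : ContinuousOn (fun p : ℝ × ℝ => (p.2 ^ 2)⁻¹) K :=
    ContinuousOn.inv₀ (by fun_prop) fun p hp => (pow_pos (hKU hp) 2).ne'
  have hint : IntegrableOn (fun p : ℝ × ℝ => (p.2 ^ 2)⁻¹ * g p) K :=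
    (hdensity.mul (hg.mono hKU)).integrableOn_compact hK
  have hsupport : Function.support (fun p : ℝ × ℝ => (p.2 ^ 2)⁻¹ * g p) ⊆ K := fun p hp => by
    contrapose! hp
    simp [hgK p hp]
  rw [volH, integrable_withDensity_iff_integrable_smul' measurable_hyperbolicDensity (by simp)]
  refine ((integrableOn_iff_integrable_of_support_subset hsupport).1 hint).integrableOn.congr
    (.of_forall fun p => ?_)
  simp only [smul_eq_mul]
  rw [ENNReal.toReal_ofReal (by positivity)]

lemma integrable_sq_mul_curlAlong_volH (hK : IsCompact K) (hKU : K ⊆ UHP) (hA₁ : ContDiff ℝ 1 A₁)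
    (hA₂ : ContDiff ℝ 1 A₂) (hA₁K : tsupport A₁ ⊆ K) (hA₂K : tsupport A₂ ⊆ K) (v w : ℝ × ℝ) :
    Integrable (fun p : ℝ × ℝ => p.2 ^ 2 * curlAlong v w A₁ A₂ p) volH :=
  integrable_volH_of_continuousOn hK hKU
    ((continuous_snd.pow 2).mul (continuous_curlAlong v w hA₁ hA₂)).continuousOn fun p hp => by
      rw [curlAlong_of_notMem_tsupport v w (mt (@hA₁K p) hp) (mt (@hA₂K p) hp), mul_zero]

lemma integral_sq_mul_curlAlong_volH (hK : IsCompact K) (hKU : K ⊆ UHP) (hA₁ : ContDiff ℝ 1 A₁)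
    (hA₂ : ContDiff ℝ 1 A₂) (hA₁K : tsupport A₁ ⊆ K) (hA₂K : tsupport A₂ ⊆ K) (v w : ℝ × ℝ) :
    ∫ p, p.2 ^ 2 * curlAlong v w A₁ A₂ p ∂volH = 0 := by
  rw [integral_sq_mul_volH, setIntegral_eq_integral_of_forall_compl_eq_zero fun p hp =>
    curlAlong_of_notMem_tsupport v w (fun h => hp (hKU (hA₁K h))) fun h => hp (hKU (hA₂K h))]
  exact integral_curlAlong_eq_zero v w hA₁ (hK.of_isClosed_subset (isClosed_tsupport _) hA₁K)
    hA₂ (hK.of_isClosed_subset (isClosed_tsupport _) hA₂K)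

end HyperbolicMeasure

section Intensity

variable {A₁ A₂ : ℝ × ℝ → ℝ} {f : ℝ × ℝ → ℂ} {p : ℝ × ℝ} {C₀ ε : ℝ}

/-- The smoothed sign of the magnetic field, used as the weight of the current. -/
def fieldSign (A₁ A₂ : ℝ × ℝ → ℝ) (p : ℝ × ℝ) : ℝ := smoothSign (fieldB A₁ A₂ p)

/-- The curl of the current of `f` weighted by `fieldSign`: a divergence-form term, so that its
Lebesgue integral vanishes. -/
def weightedCurrentCurl (A₁ A₂ : ℝ × ℝ → ℝ) (f : ℝ × ℝ → ℂ) : ℝ × ℝ → ℝ :=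
  curlAlong (1, 0) (0, 1) (fieldSign A₁ A₂ * magneticCurrent A₁ (1, 0) f)
    (fieldSign A₁ A₂ * magneticCurrent A₂ (0, 1) f)

lemma contDiffOn_fieldB (hA₁ : ContDiffOn ℝ 2 A₁ UHP) (hA₂ : ContDiffOn ℝ 2 A₂ UHP) :
    ContDiffOn ℝ 1 (fieldB A₁ A₂) UHP := by
  have hd {A : ℝ × ℝ → ℝ} (hA : ContDiffOn ℝ 2 A UHP) (v : ℝ × ℝ) :
      ContDiffOn ℝ 1 (fun q => fderiv ℝ A q v) UHP :=
    (hA.fderiv_of_isOpen isOpen_UHP one_add_one_eq_two.le).clm_apply contDiffOn_const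
  exact (contDiffOn_snd.pow 2).mul ((hd hA₂ (1, 0)).sub (hd hA₁ (0, 1)))

lemma contDiffOn_fieldSign (hA₁ : ContDiffOn ℝ 2 A₁ UHP) (hA₂ : ContDiffOn ℝ 2 A₂ UHP) :
    ContDiffOn ℝ 1 (fieldSign A₁ A₂) UHP :=
  contDiff_smoothSign.comp_contDiffOn (contDiffOn_fieldB hA₁ hA₂)

lemma H2.nonneg (h2 : H2 C₀ A₁ A₂) : 0 ≤ C₀ := by
  have hmem : ((0 : ℝ), (1 : ℝ)) ∈ UHP := one_pos (α := ℝ)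
  have hb : 0 < intenB A₁ A₂ (0, 1) + 1 := by unfold intenB; positivity
  exact nonneg_of_mul_nonneg_left (le_trans (by positivity) (h2 _ hmem)) hb

lemma sq_mul_fderiv_fieldSign_le (hB : DifferentiableAt ℝ (fieldB A₁ A₂) p) (h2 : H2 C₀ A₁ A₂)
    (hp : p ∈ UHP) :
    p.2 ^ 2 * (fderiv ℝ (fieldSign A₁ A₂) p (1, 0) ^ 2 + fderiv ℝ (fieldSign A₁ A₂) p (0, 1) ^ 2)
      ≤ (2 * C₀) ^ 2 := by
  have hp2 : 0 < p.2 := hp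
  set k := deriv smoothSign (fieldB A₁ A₂ p)
  set X := dXr (fieldB A₁ A₂) p
  set Y := dYr (fieldB A₁ A₂) p
  have hchain : fderiv ℝ (fieldSign A₁ A₂) p = k • fderiv ℝ (fieldB A₁ A₂) p :=
    ((contDiff_smoothSign.differentiable one_ne_zero _).hasDerivAt.comp_hasFDerivAt p
      hB.hasFDerivAt).fderiv
  have hgrad : |k| * (p.2 * √(X ^ 2 + Y ^ 2)) ≤ 2 * C₀ :=
    calc |k| * (p.2 * √(X ^ 2 + Y ^ 2)) ≤ |k| * (C₀ * (intenB A₁ A₂ p + 1)) := by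
          gcongr ?_ * ?_
          exact h2 p hp
      _ = |k| * (|fieldB A₁ A₂ p| + 1) * C₀ := by rw [intenB]; ring
      _ ≤ 2 * C₀ := by
          gcongr
          · exact h2.nonneg
          · exact abs_deriv_smoothSign_mul_le _
  calc p.2 ^ 2 * (fderiv ℝ (fieldSign A₁ A₂) p (1, 0) ^ 2
        + fderiv ℝ (fieldSign A₁ A₂) p (0, 1) ^ 2)
      = p.2 ^ 2 * ((k * X) ^ 2 + (k * Y) ^ 2) := by rw [hchain]; rfl
    _ = (|k| * (p.2 * √(X ^ 2 + Y ^ 2))) ^ 2 := by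
        rw [mul_pow |k|, mul_pow p.2, sq_abs, sq_sqrt (by positivity)]
        ring
    _ ≤ (2 * C₀) ^ 2 := by gcongr

lemma intenB_mul_sq_norm_le (hA₁ : ContDiffOn ℝ 2 A₁ UHP) (hA₂ : ContDiffOn ℝ 2 A₂ UHP)
    (h2 : H2 C₀ A₁ A₂) (hε : 0 < ε) (hf : ContDiffAt ℝ 2 f p) (hp : p ∈ UHP) :
    intenB A₁ A₂ p * ‖f p‖ ^ 2 ≤
      (1 + ε / 2) * (p.2 ^ 2 * (‖magneticDeriv A₁ (1, 0) f p‖ ^ 2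
        + ‖magneticDeriv A₂ (0, 1) f p‖ ^ 2))
      + (1 + 2 * C₀ ^ 2 / ε) * ‖f p‖ ^ 2 - p.2 ^ 2 * weightedCurrentCurl A₁ A₂ f p := by
  have hp2 : 0 < p.2 := hp
  have hU : UHP ∈ nhds p := isOpen_UHP.mem_nhds hp
  set P := ‖magneticDeriv A₁ (1, 0) f p‖ ^ 2 + ‖magneticDeriv A₂ (0, 1) f p‖ ^ 2
  set G := fderiv ℝ (fieldSign A₁ A₂) p (1, 0) ^ 2 + fderiv ℝ (fieldSign A₁ A₂) p (0, 1) ^ 2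
  have hgrad : p.2 ^ 2 * G ≤ (2 * C₀) ^ 2 := sq_mul_fderiv_fieldSign_le
    (((contDiffOn_fieldB hA₁ hA₂).contDiffAt hU).differentiableAt one_ne_zero) h2 hp
  have hcurl : fieldSign A₁ A₂ p * curlAlong (1, 0) (0, 1) A₁ A₂ p * ‖f p‖ ^ 2 ≤
      (1 + ε / 2) * P + G / (2 * ε) * ‖f p‖ ^ 2 - weightedCurrentCurl A₁ A₂ f p :=
    mul_curlAlong_mul_sq_norm_le (1, 0) (0, 1) hε hf
      ((hA₁.contDiffAt hU).differentiableAt two_ne_zero)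
      ((hA₂.contDiffAt hU).differentiableAt two_ne_zero)
      (((contDiffOn_fieldSign hA₁ hA₂).contDiffAt hU).differentiableAt one_ne_zero)
      (abs_smoothSign_le_one _)
  calc intenB A₁ A₂ p * ‖f p‖ ^ 2
      ≤ (fieldSign A₁ A₂ p * fieldB A₁ A₂ p + 1) * ‖f p‖ ^ 2 := by
        gcongr
        exact sub_le_iff_le_add.1 (abs_sub_one_le_smoothSign_mul (fieldB A₁ A₂ p))
    _ = p.2 ^ 2 * (fieldSign A₁ A₂ p * curlAlong (1, 0) (0, 1) A₁ A₂ p * ‖f p‖ ^ 2)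
        + ‖f p‖ ^ 2 := by
        rw [fieldB, curlAlong, dXr, dYr]
        ring
    _ ≤ p.2 ^ 2 * ((1 + ε / 2) * P + G / (2 * ε) * ‖f p‖ ^ 2 - weightedCurrentCurl A₁ A₂ f p)
        + ‖f p‖ ^ 2 := by gcongr
    _ = (1 + ε / 2) * (p.2 ^ 2 * P) + (1 + p.2 ^ 2 * G / (2 * ε)) * ‖f p‖ ^ 2
        - p.2 ^ 2 * weightedCurrentCurl A₁ A₂ f p := by ring
    _ ≤ (1 + ε / 2) * (p.2 ^ 2 * P) + (1 + (2 * C₀) ^ 2 / (2 * ε)) * ‖f p‖ ^ 2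
        - p.2 ^ 2 * weightedCurrentCurl A₁ A₂ f p := by gcongr
    _ = _ := by field_simp

lemma contDiff_fieldSign_mul_magneticCurrent (hA₁ : ContDiffOn ℝ 2 A₁ UHP)
    (hA₂ : ContDiffOn ℝ 2 A₂ UHP) {A : ℝ × ℝ → ℝ} (hA : ContDiffOn ℝ 2 A UHP)
    (hf : ContDiffOn ℝ 2 f UHP) (hfU : tsupport f ⊆ UHP) (v : ℝ × ℝ) :
    ContDiff ℝ 1 (fieldSign A₁ A₂ * magneticCurrent A v f) :=
  contDiff_of_tsupport_subset isOpen_UHP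
    ((contDiffOn_fieldSign hA₁ hA₂).mul
      (contDiffOn_magneticCurrent isOpen_UHP hf (hA.of_le one_le_two) v))
    ((tsupport_mul_magneticCurrent_subset _ _ _ _).trans hfU)

lemma integrable_intenB_mul_sq_norm_volH (hA₁ : ContDiffOn ℝ 2 A₁ UHP) (hA₂ : ContDiffOn ℝ 2 A₂ UHP)
    (hf : Continuous f) (hfc : HasCompactSupport f) (hfU : tsupport f ⊆ UHP) :
    Integrable (fun p => intenB A₁ A₂ p * ‖f p‖ ^ 2) volH :=
  integrable_volH_of_continuousOn hfc hfU
    ((contDiffOn_fieldB hA₁ hA₂).continuousOn.abs.mul (hf.norm.pow 2).continuousOn) fun p hp => by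
      simp [image_eq_zero_of_notMem_tsupport hp]

lemma integrable_sq_norm_volH (hf : Continuous f) (hfc : HasCompactSupport f)
    (hfU : tsupport f ⊆ UHP) : Integrable (fun p => ‖f p‖ ^ 2) volH :=
  integrable_volH_of_continuousOn hfc hfU (hf.norm.pow 2).continuousOn fun p hp => by
    simp [image_eq_zero_of_notMem_tsupport hp]

lemma integrable_sq_mul_sq_norm_magneticDeriv_volH (hA₁ : ContDiffOn ℝ 1 A₁ UHP)
    (hA₂ : ContDiffOn ℝ 1 A₂ UHP) (hf : ContDiffOn ℝ 2 f UHP) (hfc : HasCompactSupport f)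
    (hfU : tsupport f ⊆ UHP) (v w : ℝ × ℝ) :
    Integrable (fun p => p.2 ^ 2 *
      (‖magneticDeriv A₁ v f p‖ ^ 2 + ‖magneticDeriv A₂ w f p‖ ^ 2)) volH := by
  have hP₁ := (contDiffOn_magneticDeriv isOpen_UHP hf hA₁ v).continuousOn
  have hP₂ := (contDiffOn_magneticDeriv isOpen_UHP hf hA₂ w).continuousOn
  refine integrable_volH_of_continuousOn hfc hfU
    ((continuousOn_snd.pow 2).mul ((hP₁.norm.pow 2).add (hP₂.norm.pow 2))) fun p hp => ?_
  simp [magneticDeriv_of_notMem_tsupport _ _ hp]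

end Intensity

theorem intensity_form_bound_general {A₁ A₂ : ℝ × ℝ → ℝ} (hA₁ : ContDiffOn ℝ 2 A₁ UHP)
    (hA₂ : ContDiffOn ℝ 2 A₂ UHP) {C₀ : ℝ} (h2 : H2 C₀ A₁ A₂) {ε : ℝ} (hε : 0 < ε)
    {f : ℝ × ℝ → ℂ} (hf : ContDiff ℝ 2 f) (hfc : HasCompactSupport f) (hfU : tsupport f ⊆ UHP) :
    ∫ p, intenB A₁ A₂ p * ‖f p‖ ^ 2 ∂volH ≤
      (1 + ε / 2) * qA A₁ A₂ f + (1 + 2 * C₀ ^ 2 / ε) * ∫ p, ‖f p‖ ^ 2 ∂volH := by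
  have hJ₁ := contDiff_fieldSign_mul_magneticCurrent hA₁ hA₂ hA₁ hf.contDiffOn hfU (1, 0)
  have hJ₂ := contDiff_fieldSign_mul_magneticCurrent hA₁ hA₂ hA₂ hf.contDiffOn hfU (0, 1)
  have hJ₁_supp := tsupport_mul_magneticCurrent_subset (fieldSign A₁ A₂) A₁ (1, 0) f
  have hJ₂_supp := tsupport_mul_magneticCurrent_subset (fieldSign A₁ A₂) A₂ (0, 1) f
  have hb_int := integrable_intenB_mul_sq_norm_volH hA₁ hA₂ hf.continuous hfc hfU
  have hq_int := (integrable_sq_mul_sq_norm_magneticDeriv_volH (hA₁.of_le one_le_two)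
    (hA₂.of_le one_le_two) hf.contDiffOn hfc hfU (1, 0) (0, 1)).const_mul (1 + ε / 2)
  have hf_int := (integrable_sq_norm_volH hf.continuous hfc hfU).const_mul (1 + 2 * C₀ ^ 2 / ε)
  have hcurl_int : Integrable (fun p => p.2 ^ 2 * weightedCurrentCurl A₁ A₂ f p) volH :=
    integrable_sq_mul_curlAlong_volH hfc hfU hJ₁ hJ₂ hJ₁_supp hJ₂_supp _ _
  have hcurl_zero : ∫ p, p.2 ^ 2 * weightedCurrentCurl A₁ A₂ f p ∂volH = 0 :=
    integral_sq_mul_curlAlong_volH hfc hfU hJ₁ hJ₂ hJ₁_supp hJ₂_supp _ _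
  refine (integral_mono_ae hb_int ((hq_int.add hf_int).sub hcurl_int) ?_).trans_eq ?_
  · filter_upwards [ae_volH_mem_UHP] with p hp
    exact intenB_mul_sq_norm_le hA₁ hA₂ h2 hε hf.contDiffAt hp
  · rw [integral_sub' (hq_int.add hf_int) hcurl_int, integral_add' hq_int hf_int, hcurl_zero,
      sub_zero, integral_const_mul, integral_const_mul]
    rfl

/-- under (H1) and (H2), for every `ε ∈ (0,1)` there is `C_ε > 0` with
`∫ b |f|² dv ≤ (1 + ε/2) q_A(f) + C_ε ‖f‖²` for all test functions `f`. -/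
theorem intensity_form_bound
    (A₁ A₂ : ℝ × ℝ → ℝ) (hA₁ : ContDiffOn ℝ 2 A₁ UHP) (hA₂ : ContDiffOn ℝ 2 A₂ UHP)
    (h1 : H1 A₁ A₂) (h2 : ∃ C₀ > 0, H2 C₀ A₁ A₂)
    (ε : ℝ) (hε0 : 0 < ε) (hε1 : ε < 1) :
    ∃ Cε > 0, ∀ f : ℝ × ℝ → ℂ, IsTestOn UHP f →
      ∫ p, intenB A₁ A₂ p * ‖f p‖ ^ 2 ∂volH ≤
        (1 + ε / 2) * qA A₁ A₂ f + Cε * ∫ p, ‖f p‖ ^ 2 ∂volH := by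
  obtain ⟨C₀, -, h2⟩ := h2
  exact ⟨1 + 2 * C₀ ^ 2 / ε, by positivity, fun f ⟨hf, hfc, hfU⟩ =>
    intensity_form_bound_general hA₁ hA₂ h2 hε0 (contDiff_infty.1 hf 2) hfc hfU⟩
end
end

section
/- For every real λ: N(λ; q^{A⁰,0}_K) ≤ (|K| β / (2π e^{t₀})) Σ_{k=0}^∞ [λ - 1/4 - (2k+1)β]₊⁰, where [ρ]₊⁰ = 1 if ρ > 0 and 0 otherwise. -/
open MeasureTheory Real Filter

noncomputable section

/-- The rectangle `K = X₀ + K₀` with `K₀ = (-ε₀ a e^{t₀}/2, ε₀ a e^{t₀}/2) × (-ε₀/2, ε₀/2)`. -/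
def Krect (x₀ t₀ a ε₀ : ℝ) : Set (ℝ × ℝ) :=
  Set.Ioo (x₀ - ε₀ * a * Real.exp t₀ / 2) (x₀ + ε₀ * a * Real.exp t₀ / 2) ×ˢ
    Set.Ioo (t₀ - ε₀ / 2) (t₀ + ε₀ / 2)

/-- `Ã₁(x,t) = -∫_{e^{t₀}}^{e^t} b̃(x,s) s⁻² ds`. -/
def Atil (A₁ A₂ : ℝ × ℝ → ℝ) (t₀ : ℝ) (p : ℝ × ℝ) : ℝ :=
  -∫ s in Real.exp t₀..Real.exp p.2, fieldB A₁ A₂ (p.1, s) / s ^ 2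

/-- `A₁⁰(x,t) = -(t - t₀) e^{-t₀} b̃₀`. -/
def Azero (t₀ b₀ : ℝ) (p : ℝ × ℝ) : ℝ := -(p.2 - t₀) * Real.exp (-t₀) * b₀

/-- The Dirichlet form `q̂^Ã_K`. -/
def qhatK (A₁ A₂ : ℝ × ℝ → ℝ) (x₀ t₀ a ε₀ : ℝ) (w : ℝ × ℝ → ℂ) : ℝ :=
  ∫ p in Krect x₀ t₀ a ε₀,
    (Real.exp (2 * p.2) * ‖-Complex.I * dX w p - (Atil A₁ A₂ t₀ p : ℂ) * w p‖ ^ 2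
      + ‖dY w p‖ ^ 2 + (1/4) * ‖w p‖ ^ 2)

/-- The Dirichlet form `q̂^{Ã,0}_K` (with frozen factor `e^{2t₀}`). -/
def qhatK0 (A₁ A₂ : ℝ × ℝ → ℝ) (x₀ t₀ a ε₀ : ℝ) (w : ℝ × ℝ → ℂ) : ℝ :=
  ∫ p in Krect x₀ t₀ a ε₀,
    (Real.exp (2 * t₀) * ‖-Complex.I * dX w p - (Atil A₁ A₂ t₀ p : ℂ) * w p‖ ^ 2
      + ‖dY w p‖ ^ 2 + (1/4) * ‖w p‖ ^ 2)

/-- The Dirichlet form `q^{A⁰,0}_K` of the frozen constant magnetic field `b̃₀`. -/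
def qK0 (x₀ t₀ a ε₀ b₀ : ℝ) (w : ℝ × ℝ → ℂ) : ℝ :=
  ∫ p in Krect x₀ t₀ a ε₀,
    (Real.exp (2 * t₀) * ‖-Complex.I * dX w p - (Azero t₀ b₀ p : ℂ) * w p‖ ^ 2
      + ‖dY w p‖ ^ 2 + (1/4) * ‖w p‖ ^ 2)


/-- Dirichlet eigenvalue counting function of `q^{A⁰,0}_K` on `L²(K)`. -/
def NK0 (x₀ t₀ a ε₀ b₀ lam : ℝ) : ℕ :=
  NN (qK0 x₀ t₀ a ε₀ b₀) {w | IsTestOn (Krect x₀ t₀ a ε₀) w}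
    (fun w => ∫ p in Krect x₀ t₀ a ε₀, ‖w p‖ ^ 2) lam

/-!
Expanding a test function in a Fourier series in `x` splits the magnetic form into shifted harmonic
oscillators in `t`, one for each frequency. By the ladder-operator argument each oscillator has
energy at least `(2M + 1)β` under `M` linear constraints. The centre of the potential well moves
with the frequency, so up to a bounded number only as many frequencies as there are flux quanta in
the rectangle matter; for the others the potential alone exceeds `(2M + 1)β`. This bounds the
dimension of a trial space by the flux times `M`, up to a boundary term independent of the height
of the rectangle. Since the Landau Hamiltonian commutes with magnetic translations, `N` translates
of a trial space can be stacked on top of each other, and letting `N → ∞` removes the boundary term.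
-/

section CompactSupport

lemma integrable_norm_sq_of_hasCompactSupport {X E : Type*} [TopologicalSpace X]
    [MeasurableSpace X] [OpensMeasurableSpace X] [NormedAddCommGroup E] {ν : Measure X}
    [IsFiniteMeasureOnCompacts ν] {f : X → E} (hf : Continuous f) (hc : HasCompactSupport f) :
    Integrable (fun x => ‖f x‖ ^ 2) ν :=
  Continuous.integrable_of_hasCompactSupport (by fun_prop)
    (hc.mono fun x hx h0 => hx (by simp [h0]))

lemma hasDerivAt_deriv_of_contDiff_one {E : Type*} [NormedAddCommGroup E] [NormedSpace ℝ E]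
    {f : ℝ → E} (hf : ContDiff ℝ 1 f) (t : ℝ) : HasDerivAt f (deriv f t) t :=
  (hf.differentiable one_ne_zero t).hasDerivAt

lemma exists_hasCompactSupport_primitive {E : Type*} [NormedAddCommGroup E] [NormedSpace ℝ E]
    {f : ℝ → E} (hc : HasCompactSupport f) (h0 : ∫ t, f t = 0) :
    ∃ c : ℝ, HasCompactSupport fun t => ∫ s in c..t, f s := by
  obtain ⟨R, -, hR⟩ := hc.isCompact.isBounded.subset_ball_lt 0 0
  have zero_of_notMem : ∀ s, s ∉ Set.Ioo (-R) R → f s = 0 := fun s hs =>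
    image_eq_zero_of_notMem_tsupport fun hm => hs (by simpa [Real.ball_eq_Ioo] using hR hm)
  refine ⟨-R, HasCompactSupport.intro (isCompact_Icc (a := -R) (b := R)) fun t ht => ?_⟩
  rcases lt_or_ge t (-R) with hlt | hge
  · rw [intervalIntegral.integral_congr (g := fun _ => 0), intervalIntegral.integral_zero]
    intro s hs
    rw [Set.uIcc_of_ge hlt.le] at hs
    exact zero_of_notMem s fun h => h.1.not_ge hs.2
  · have hRt : R < t := not_le.1 fun h => ht ⟨hge, h⟩
    rw [intervalIntegral.integral_eq_integral_of_support_subset, h0]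
    intro s hs
    have hmem := not_imp_comm.1 (zero_of_notMem s) hs
    exact ⟨hmem.1, hmem.2.le.trans hRt.le⟩

end CompactSupport

section LadderOperators

variable {E : Type*} [NormedAddCommGroup E] [NormedSpace ℝ E]

/-- The energy `∫ ‖f'‖² + (p + b t)² ‖f‖²` of a harmonic oscillator centred at `-p / b`. -/
def oscillatorEnergy (p b : ℝ) (f : ℝ → E) : ℝ :=
  ∫ t, (‖deriv f t‖ ^ 2 + ‖(p + b * t) • f t‖ ^ 2)

/-- The annihilation operator `d/dt + (p + b t)` of the oscillator. -/
def lowering (p b : ℝ) (f : ℝ → E) (t : ℝ) : E := deriv f t + (p + b * t) • f t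

/-- The creation operator `-d/dt + (p + b t)` of the oscillator, formally adjoint to
`lowering p b`. -/
def raising (p b : ℝ) (f : ℝ → E) (t : ℝ) : E := -deriv f t + (p + b * t) • f t

/-- The Gaussian `exp (-p t - b t² / 2)`, which `lowering p b` annihilates. It is not normalised,
and its inverse is `groundState (-p) (-b)`. -/
def groundState (p b : ℝ) (t : ℝ) : ℝ := exp (-(p * t + b * t ^ 2 / 2))

lemma raising_eq_neg_lowering_neg (p b : ℝ) (f : ℝ → E) (t : ℝ) :
    raising p b f t = -lowering (-p) (-b) f t := by
  simp only [raising, lowering]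
  module

lemma oscillatorEnergy_neg (p b : ℝ) (f : ℝ → E) :
    oscillatorEnergy (-p) (-b) f = oscillatorEnergy p b f := by
  refine integral_congr_ae (ae_of_all _ fun t => ?_)
  simp only [show -p + -b * t = -(p + b * t) by ring, neg_smul, norm_neg]

lemma continuous_lowering (p b : ℝ) {f : ℝ → E} (hf : ContDiff ℝ 1 f) :
    Continuous (lowering p b f) := by
  have := hf.continuous
  have := hf.continuous_deriv le_rfl
  unfold lowering
  fun_prop

lemma hasCompactSupport_lowering (p b : ℝ) {f : ℝ → E} (hc : HasCompactSupport f) :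
    HasCompactSupport (lowering p b f) :=
  hc.deriv.add (hc.smul_left (f := fun t => p + b * t))

lemma integrable_oscillatorEnergy (p b : ℝ) {f : ℝ → E} (hf : ContDiff ℝ 1 f)
    (hc : HasCompactSupport f) :
    Integrable fun t => ‖deriv f t‖ ^ 2 + ‖(p + b * t) • f t‖ ^ 2 := by
  have := hf.continuous
  exact (integrable_norm_sq_of_hasCompactSupport (hf.continuous_deriv le_rfl) hc.deriv).add
    (integrable_norm_sq_of_hasCompactSupport (f := fun t => (p + b * t) • f t) (by fun_prop)
      (hc.smul_left (f := fun t => p + b * t)))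

lemma integral_raising_bilinear {F G : Type*} [NormedAddCommGroup F] [NormedSpace ℝ F]
    [NormedAddCommGroup G] [NormedSpace ℝ G] (L : E →L[ℝ] F →L[ℝ] G) (p b : ℝ)
    {f : ℝ → E} {g : ℝ → F} (hf : ContDiff ℝ 1 f) (hc : HasCompactSupport f)
    (hg : ContDiff ℝ 1 g) :
    ∫ t, L (raising p b f t) (g t) = ∫ t, L (f t) (lowering p b g t) := by
  have hf0 := hf.continuous
  have hg0 := hg.continuous
  have hf1 := hf.continuous_deriv le_rfl
  have hg1 := hg.continuous_deriv le_rfl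
  have integrable_of_left : ∀ {u : ℝ → E} {v : ℝ → F}, Continuous u → Continuous v →
      HasCompactSupport u → Integrable fun t => L (u t) (v t) := fun hu hv hcu =>
    Continuous.integrable_of_hasCompactSupport (by fun_prop)
      (hcu.mono fun t ht h0 => ht (by simp [h0]))
  have hfg' := integrable_of_left hf0 hg1 hc
  have hf'g := integrable_of_left hf1 hg0 hc.deriv
  have haffine := integrable_of_left hf0 (v := fun t => (p + b * t) • g t) (by fun_prop) hc
  have by_parts := integral_bilinear_hasDerivAt_right_eq_neg_left_of_integrable
    (fun t _ => hasDerivAt_deriv_of_contDiff_one hf t)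
    (fun t _ => hasDerivAt_deriv_of_contDiff_one hg t) hfg' hf'g (integrable_of_left hf0 hg0 hc)
  calc ∫ t, L (raising p b f t) (g t)
      = ∫ t, (-(L (deriv f t) (g t)) + L (f t) ((p + b * t) • g t)) := by
        simp [raising]
    _ = ∫ t, (L (f t) (deriv g t) + L (f t) ((p + b * t) • g t)) := by
        rw [integral_add hf'g.fun_neg haffine, integral_add hfg' haffine, by_parts, integral_neg]
    _ = ∫ t, L (f t) (lowering p b g t) := by simp [lowering]

lemma groundState_mul_groundState_neg (p b t : ℝ) :
    groundState p b t * groundState (-p) (-b) t = 1 := by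
  rw [groundState, groundState, ← exp_add, exp_eq_one_iff]
  ring

lemma contDiff_groundState (p b : ℝ) : ContDiff ℝ 1 (groundState p b) := by
  unfold groundState
  fun_prop

lemma hasDerivAt_groundState (p b t : ℝ) :
    HasDerivAt (groundState p b) (-(p + b * t) * groundState p b t) t := by
  have hpoly := (((hasDerivAt_id t).const_mul p).add
    ((((hasDerivAt_id t).pow 2).const_mul b).div_const 2)).neg
  refine hpoly.exp.congr_deriv ?_
  simp only [groundState, id, Pi.add_apply, Pi.neg_apply, Pi.pow_apply]
  ring

/-- Variation of constants: the solution of `lowering p b u = h` vanishing at `c`. -/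
def loweringInv (p b c : ℝ) (h : ℝ → E) (t : ℝ) : E :=
  groundState p b t • ∫ s in c..t, groundState (-p) (-b) s • h s

variable [CompleteSpace E]

lemma hasDerivAt_loweringInv (p b c : ℝ) {h : ℝ → E} (hh : Continuous h) (t : ℝ) :
    HasDerivAt (loweringInv p b c h) (h t - (p + b * t) • loweringInv p b c h t) t := by
  have hcont : Continuous fun s => groundState (-p) (-b) s • h s :=
    (contDiff_groundState (-p) (-b)).continuous.smul hh
  refine ((hasDerivAt_groundState p b t).smul
    (hcont.integral_hasStrictDerivAt c t).hasDerivAt).congr_deriv ?_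
  rw [smul_smul, groundState_mul_groundState_neg, loweringInv]
  module

lemma contDiff_loweringInv (p b c : ℝ) {h : ℝ → E} (hh : Continuous h) :
    ContDiff ℝ 1 (loweringInv p b c h) := by
  have hderiv := hasDerivAt_loweringInv p b c hh
  have hcont : Continuous (loweringInv p b c h) :=
    continuous_iff_continuousAt.2 fun t => (hderiv t).continuousAt
  rw [contDiff_one_iff_deriv, funext fun t => (hderiv t).deriv]
  exact ⟨fun t => (hderiv t).differentiableAt, by fun_prop⟩

lemma lowering_loweringInv (p b c : ℝ) {h : ℝ → E} (hh : Continuous h) :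
    lowering p b (loweringInv p b c h) = h := by
  ext t
  rw [lowering, (hasDerivAt_loweringInv p b c hh t).deriv, sub_add_cancel]

lemma exists_raising_eq (p b : ℝ) {f : ℝ → E} (hf : Continuous f) (hc : HasCompactSupport f)
    (horth : ∫ t, groundState p b t • f t = 0) :
    ∃ g : ℝ → E, ContDiff ℝ 1 g ∧ HasCompactSupport g ∧ raising p b g = f := by
  obtain ⟨c, hprim⟩ := exists_hasCompactSupport_primitive
    (hc.smul_left (f := groundState p b)) horth
  refine ⟨loweringInv (-p) (-b) c (-f), contDiff_loweringInv _ _ _ hf.neg,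
    hprim.mono fun t ht h0 => ht ?_, funext fun t => ?_⟩
  · have h0' : ∫ s in c..t, groundState p b s • f s = 0 := h0
    simp [loweringInv, h0']
  · rw [raising_eq_neg_lowering_neg, lowering_loweringInv _ _ _ hf.neg, Pi.neg_apply, neg_neg]

end LadderOperators

section SpectralGap

variable {E : Type*} [NormedAddCommGroup E] [InnerProductSpace ℝ E]

lemma integral_deriv_affine_mul_norm_sq (p b : ℝ) {f : ℝ → E} (hf : ContDiff ℝ 1 f)
    (hc : HasCompactSupport f) :
    ∫ t, (b * ‖f t‖ ^ 2 + (p + b * t) * (2 * inner ℝ (f t) (deriv f t))) = 0 := by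
  have := hf.continuous
  have := hf.continuous_deriv le_rfl
  have hderiv : ∀ t, HasDerivAt (fun s => (p + b * s) * ‖f s‖ ^ 2)
      (b * ‖f t‖ ^ 2 + (p + b * t) * (2 * inner ℝ (f t) (deriv f t))) t := fun t =>
    ((((hasDerivAt_id t).const_mul b).const_add p).congr_deriv (mul_one b)).mul
      (hasDerivAt_deriv_of_contDiff_one hf t).norm_sq
  have hsupp : HasCompactSupport fun t => (p + b * t) * ‖f t‖ ^ 2 :=
    HasCompactSupport.mul_left (f := fun t => p + b * t)
      (hc.comp_left (g := fun y => ‖y‖ ^ 2) (by simp))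
  refine integral_eq_zero_of_hasDerivAt_of_integrable hderiv ?_
    (Continuous.integrable_of_hasCompactSupport (by fun_prop) hsupp)
  refine Continuous.integrable_of_hasCompactSupport (by fun_prop) ?_
  rw [← funext fun t => (hderiv t).deriv]
  exact hsupp.deriv

lemma integral_norm_lowering_sq (p b : ℝ) {f : ℝ → E} (hf : ContDiff ℝ 1 f)
    (hc : HasCompactSupport f) :
    ∫ t, ‖lowering p b f t‖ ^ 2 = oscillatorEnergy p b f - b * ∫ t, ‖f t‖ ^ 2 := by
  have hlow := integrable_norm_sq_of_hasCompactSupport (ν := volume)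
    (continuous_lowering p b hf) (hasCompactSupport_lowering p b hc)
  have hosc := integrable_oscillatorEnergy p b hf hc
  have hsq := (integrable_norm_sq_of_hasCompactSupport (ν := volume) hf.continuous hc).const_mul b
  have hdiff : Integrable fun t =>
      ‖lowering p b f t‖ ^ 2 - (‖deriv f t‖ ^ 2 + ‖(p + b * t) • f t‖ ^ 2) := hlow.sub hosc
  have expand : ∀ t, b * ‖f t‖ ^ 2 + (p + b * t) * (2 * inner ℝ (f t) (deriv f t)) =
      ‖lowering p b f t‖ ^ 2 - (‖deriv f t‖ ^ 2 + ‖(p + b * t) • f t‖ ^ 2) + b * ‖f t‖ ^ 2 := by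
    intro t
    rw [lowering, norm_add_sq_real, inner_smul_right, real_inner_comm]
    ring
  have hzero := integral_deriv_affine_mul_norm_sq p b hf hc
  rw [integral_congr_ae (ae_of_all _ expand), integral_add hdiff hsq,
    integral_sub hlow hosc, integral_const_mul] at hzero
  rw [oscillatorEnergy]
  linarith

lemma integral_norm_raising_sq (p b : ℝ) {f : ℝ → E} (hf : ContDiff ℝ 1 f)
    (hc : HasCompactSupport f) :
    ∫ t, ‖raising p b f t‖ ^ 2 = oscillatorEnergy p b f + b * ∫ t, ‖f t‖ ^ 2 := by
  simp only [raising_eq_neg_lowering_neg, norm_neg]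
  rw [integral_norm_lowering_sq _ _ hf hc, oscillatorEnergy_neg]
  ring

lemma mul_integral_norm_raising_sq_le (p b : ℝ) {γ : ℝ} (hγ : 0 ≤ γ) {g : ℝ → E}
    (hg : ContDiff ℝ 1 g) (hgc : HasCompactSupport g) (hf : ContDiff ℝ 1 (raising p b g))
    (hgap : γ * ∫ t, ‖g t‖ ^ 2 ≤ ∫ t, ‖raising p b g t‖ ^ 2) :
    γ * ∫ t, ‖raising p b g t‖ ^ 2 ≤ ∫ t, ‖lowering p b (raising p b g) t‖ ^ 2 := by
  set f := raising p b g
  have hg0 := hg.continuous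
  have hlow := continuous_lowering p b hf
  have hfc : HasCompactSupport f := hgc.deriv.neg.add (hgc.smul_left (f := fun t => p + b * t))
  have adjoint : ∫ t, ‖f t‖ ^ 2 = ∫ t, inner ℝ (g t) (lowering p b f t) := by
    simp only [← real_inner_self_eq_norm_sq]
    exact integral_raising_bilinear (innerSL ℝ) p b hg hgc hf
  -- As for `A A*` and `A* A`, the lower bound passes from `g` to its image under `raising`: expand
  -- the square below.
  have hnonneg : 0 ≤ ∫ t, ‖lowering p b f t - γ • g t‖ ^ 2 :=
    integral_nonneg fun t => sq_nonneg _
  have hlow_int := integrable_norm_sq_of_hasCompactSupport (ν := volume) hlow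
    (hasCompactSupport_lowering p b hfc)
  have hinner_int : Integrable fun t => 2 * γ * inner ℝ (g t) (lowering p b f t) :=
    Continuous.integrable_of_hasCompactSupport (by fun_prop)
      (hgc.mono fun t ht h0 => ht (by simp [h0]))
  have hg_int := (integrable_norm_sq_of_hasCompactSupport (ν := volume) hg0 hgc).const_mul (γ ^ 2)
  have hdiff : Integrable fun t =>
      ‖lowering p b f t‖ ^ 2 - 2 * γ * inner ℝ (g t) (lowering p b f t) :=
    hlow_int.sub hinner_int
  have expand : ∫ t, ‖lowering p b f t - γ • g t‖ ^ 2 =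
      (∫ t, ‖lowering p b f t‖ ^ 2) - 2 * γ * (∫ t, ‖f t‖ ^ 2) + γ ^ 2 * ∫ t, ‖g t‖ ^ 2 := by
    rw [adjoint, ← integral_const_mul, ← integral_const_mul, ← integral_sub hlow_int hinner_int,
      ← integral_add hdiff hg_int]
    congr 1 with t
    rw [norm_sub_sq_real, inner_smul_right, real_inner_comm, norm_smul, mul_pow, norm_eq_abs,
      sq_abs]
    ring
  nlinarith [mul_le_mul_of_nonneg_left hgap hγ]

variable [CompleteSpace E]

theorem exists_oscillatorEnergy_ge_of_pos (p : ℝ) {b : ℝ} (hb : 0 < b) (M : ℕ) :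
    ∃ h : Fin M → ℝ → ℝ, (∀ k, Continuous (h k)) ∧
      ∀ f : ℝ → E, ContDiff ℝ 1 f → HasCompactSupport f → (∀ k, ∫ t, h k t • f t = 0) →
        (2 * M + 1) * b * ∫ t, ‖f t‖ ^ 2 ≤ oscillatorEnergy p b f := by
  induction M with
  | zero =>
    refine ⟨Fin.elim0, fun k => k.elim0, fun f hf hc _ => ?_⟩
    have hlow := integral_norm_lowering_sq p b hf hc
    have hnonneg : 0 ≤ ∫ t, ‖lowering p b f t‖ ^ 2 := integral_nonneg fun t => sq_nonneg _
    simp only [Nat.cast_zero]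
    linarith
  | succ M ih =>
    obtain ⟨h, hh, ih⟩ := ih
    -- By adjointness, orthogonality of `raising p b g` to `H k` is orthogonality of `g` to `h k`.
    let H : Fin M → ℝ → ℝ := fun k => loweringInv p b 0 (h k)
    have hH : ∀ k, ContDiff ℝ 1 (H k) := fun k => contDiff_loweringInv p b 0 (hh k)
    refine ⟨Fin.cons (groundState p b) H, Fin.cases (contDiff_groundState p b).continuous
      fun k => (hH k).continuous, fun f hf hc horth => ?_⟩
    obtain ⟨g, hg, hgc, rfl⟩ := exists_raising_eq p b hf.continuous hc (by simpa using horth 0)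
    have hg_orth : ∀ k, ∫ t, h k t • g t = 0 := fun k => by
      have adjoint := integral_raising_bilinear (ContinuousLinearMap.lsmul ℝ ℝ).flip p b hg hgc
        (hH k)
      simp only [H, lowering_loweringInv p b 0 (hh k), ContinuousLinearMap.flip_apply,
        ContinuousLinearMap.lsmul_apply] at adjoint
      rw [← adjoint]
      simpa using horth k.succ
    have hg_gap := ih g hg hgc hg_orth
    have hraise := integral_norm_raising_sq p b hg hgc
    have hlower := integral_norm_lowering_sq p b hf hc
    have gap := mul_integral_norm_raising_sq_le p b (γ := (2 * M + 2) * b) (by positivity) hg hgc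
      hf (by linarith)
    push_cast
    linarith

theorem exists_oscillatorEnergy_ge (p : ℝ) {b : ℝ} (hb : b ≠ 0) (M : ℕ) :
    ∃ h : Fin M → ℝ → ℝ, (∀ k, Continuous (h k)) ∧
      ∀ f : ℝ → E, ContDiff ℝ 1 f → HasCompactSupport f → (∀ k, ∫ t, h k t • f t = 0) →
        (2 * M + 1) * |b| * ∫ t, ‖f t‖ ^ 2 ≤ oscillatorEnergy p b f := by
  rcases hb.lt_or_gt with hneg | hpos
  · simpa only [oscillatorEnergy_neg, abs_of_neg hneg] using
      exists_oscillatorEnergy_ge_of_pos (E := E) (-p) (neg_pos.2 hneg) M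
  · simpa only [abs_of_pos hpos] using exists_oscillatorEnergy_ge_of_pos (E := E) p hpos M

end SpectralGap

section PartialDerivatives

variable {u : ℝ × ℝ → ℂ}

lemma continuous_dX (hu : ContDiff ℝ 1 u) : Continuous (dX u) :=
  (hu.continuous_fderiv one_ne_zero).clm_apply continuous_const

lemma continuous_dY (hu : ContDiff ℝ 1 u) : Continuous (dY u) :=
  (hu.continuous_fderiv one_ne_zero).clm_apply continuous_const

lemma tsupport_dX_subset (u : ℝ × ℝ → ℂ) : tsupport (dX u) ⊆ tsupport u :=
  tsupport_fderiv_apply_subset ℝ _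

lemma tsupport_dY_subset (u : ℝ × ℝ → ℂ) : tsupport (dY u) ⊆ tsupport u :=
  tsupport_fderiv_apply_subset ℝ _

lemma hasDerivAt_dX (hu : ContDiff ℝ 1 u) (x t : ℝ) :
    HasDerivAt (fun y => u (y, t)) (dX u (x, t)) x :=
  (hu.differentiable one_ne_zero (x, t)).hasFDerivAt.comp_hasDerivAt x
    ((hasDerivAt_id x).prodMk (hasDerivAt_const x t))

lemma hasDerivAt_dY (hu : ContDiff ℝ 1 u) (x t : ℝ) :
    HasDerivAt (fun s => u (x, s)) (dY u (x, t)) t :=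
  (hu.differentiable one_ne_zero (x, t)).hasFDerivAt.comp_hasDerivAt t
    ((hasDerivAt_const t x).prodMk (hasDerivAt_id t))

end PartialDerivatives

section LandauEnergy

/-- The kinetic momentum `-iκ∂ₓ + (p + b t)` in the Landau gauge of a constant magnetic field `b`;
`p` shifts the gauge origin and `κ` scales the `x`-direction. -/
def kineticMomentum (κ p b : ℝ) (u : ℝ × ℝ → ℂ) (q : ℝ × ℝ) : ℂ :=
  -Complex.I * κ * dX u q + (p + b * q.2) • u q

/-- The energy of the Landau Hamiltonian. The integral extends over the whole plane: the domain
enters only through the supports of the test functions. -/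
def landauEnergy (κ p b : ℝ) (u : ℝ × ℝ → ℂ) : ℝ :=
  ∫ q, (‖kineticMomentum κ p b u q‖ ^ 2 + ‖dY u q‖ ^ 2)

variable {u : ℝ × ℝ → ℂ}

lemma continuous_kineticMomentum (κ p b : ℝ) (hu : ContDiff ℝ 1 u) :
    Continuous (kineticMomentum κ p b u) := by
  have := hu.continuous
  have := continuous_dX hu
  unfold kineticMomentum
  fun_prop

lemma tsupport_kineticMomentum_subset (κ p b : ℝ) (u : ℝ × ℝ → ℂ) :
    tsupport (kineticMomentum κ p b u) ⊆ tsupport u :=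
  (tsupport_add _ _).trans (Set.union_subset
    ((tsupport_mul_subset_right (f := fun _ => -Complex.I * κ)).trans (tsupport_dX_subset u))
    (tsupport_smul_subset_right (fun q : ℝ × ℝ => p + b * q.2) u))

lemma hasCompactSupport_kineticMomentum (κ p b : ℝ) (hc : HasCompactSupport u) :
    HasCompactSupport (kineticMomentum κ p b u) :=
  hc.of_isClosed_subset (isClosed_tsupport _) (tsupport_kineticMomentum_subset κ p b u)

lemma hasCompactSupport_dY (hc : HasCompactSupport u) : HasCompactSupport (dY u) :=
  hc.fderiv_apply ℝ _

lemma integrable_norm_kineticMomentum_sq (κ p b : ℝ) (hu : ContDiff ℝ 1 u)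
    (hc : HasCompactSupport u) : Integrable fun q => ‖kineticMomentum κ p b u q‖ ^ 2 :=
  integrable_norm_sq_of_hasCompactSupport (continuous_kineticMomentum κ p b hu)
    (hasCompactSupport_kineticMomentum κ p b hc)

lemma integrable_norm_dY_sq (hu : ContDiff ℝ 1 u) (hc : HasCompactSupport u) :
    Integrable fun q => ‖dY u q‖ ^ 2 :=
  integrable_norm_sq_of_hasCompactSupport (continuous_dY hu) (hasCompactSupport_dY hc)

lemma integrable_landauEnergy (κ p b : ℝ) (hu : ContDiff ℝ 1 u) (hc : HasCompactSupport u) :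
    Integrable fun q => ‖kineticMomentum κ p b u q‖ ^ 2 + ‖dY u q‖ ^ 2 :=
  (integrable_norm_kineticMomentum_sq κ p b hu hc).add (integrable_norm_dY_sq hu hc)

end LandauEnergy

section SliceFourier

/-- The `j`-th Fourier coefficient on `[xl, xr]` of the horizontal slice `v (·, t)`, as a function
of `t`. -/
def sliceFourierCoeff (xl xr : ℝ) (j : ℤ) (v : ℝ × ℝ → ℂ) (t : ℝ) : ℂ :=
  (1 / (xr - xl)) • ∫ x in xl..xr, fourier (-j) (x : AddCircle (xr - xl)) • v (x, t)

variable {xl xr : ℝ} {u v : ℝ × ℝ → ℂ}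

lemma continuous_fourier_coe (T : ℝ) (j : ℤ) :
    Continuous fun x : ℝ => (fourier j (x : AddCircle T) : ℂ) :=
  (fourier j).continuous.comp (AddCircle.continuous_mk' T)

lemma continuous_fourier_smul_slice (T : ℝ) (j : ℤ) (hv : Continuous v) (t : ℝ) :
    Continuous fun x : ℝ => fourier j (x : AddCircle T) • v (x, t) :=
  (continuous_fourier_coe T j).smul (by fun_prop)

lemma continuous_sliceFourierCoeff (xl xr : ℝ) (j : ℤ) (hv : Continuous v) :
    Continuous (sliceFourierCoeff xl xr j v) := by
  have := continuous_fourier_coe (xr - xl) (-j)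
  exact (intervalIntegral.continuous_parametric_intervalIntegral_of_continuous' (μ := volume)
    (f := fun t x => fourier (-j) (x : AddCircle (xr - xl)) • v (x, t)) (by fun_prop)
    xl xr).const_smul (1 / (xr - xl))

lemma sliceFourierCoeff_eq_zero_of_notMem {t : ℝ} (xl xr : ℝ) (j : ℤ)
    (ht : t ∉ Prod.snd '' tsupport v) : sliceFourierCoeff xl xr j v t = 0 := by
  have hv : ∀ x, v (x, t) = 0 := fun x =>
    image_eq_zero_of_notMem_tsupport fun hm => ht ⟨_, hm, rfl⟩
  simp [sliceFourierCoeff, hv]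

lemma hasCompactSupport_sliceFourierCoeff (xl xr : ℝ) (j : ℤ) (hc : HasCompactSupport v) :
    HasCompactSupport (sliceFourierCoeff xl xr j v) :=
  HasCompactSupport.intro (hc.isCompact.image continuous_snd) fun _ =>
    sliceFourierCoeff_eq_zero_of_notMem xl xr j

lemma sliceFourierCoeff_add (xl xr : ℝ) (j : ℤ) (hu : Continuous u) (hv : Continuous v) (t : ℝ) :
    sliceFourierCoeff xl xr j (u + v) t =
      sliceFourierCoeff xl xr j u t + sliceFourierCoeff xl xr j v t := by
  simp only [sliceFourierCoeff, Pi.add_apply, smul_add]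
  rw [intervalIntegral.integral_add
    ((continuous_fourier_smul_slice _ _ hu t).intervalIntegrable _ _)
    ((continuous_fourier_smul_slice _ _ hv t).intervalIntegrable _ _), smul_add]

lemma sliceFourierCoeff_mul (xl xr : ℝ) (j : ℤ) (c : ℝ → ℂ) (v : ℝ × ℝ → ℂ) (t : ℝ) :
    sliceFourierCoeff xl xr j (fun q => c q.2 * v q) t = c t * sliceFourierCoeff xl xr j v t := by
  simp only [sliceFourierCoeff, smul_eq_mul, mul_left_comm _ (c t)]
  rw [intervalIntegral.integral_const_mul, mul_smul_comm]

lemma hasDerivAt_sliceFourierCoeff (xl xr : ℝ) (j : ℤ) (hu : ContDiff ℝ 1 u)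
    (hc : HasCompactSupport u) (t : ℝ) :
    HasDerivAt (sliceFourierCoeff xl xr j u) (sliceFourierCoeff xl xr j (dY u) t) t := by
  have hslice := continuous_fourier_smul_slice (xr - xl) (-j) hu.continuous
  obtain ⟨C, hC⟩ :=
    (continuous_dY hu).bounded_above_of_compact_support (hasCompactSupport_dY hc)
  have hbound : ∀ x s : ℝ, ‖fourier (-j) (x : AddCircle (xr - xl)) • dY u (x, s)‖ ≤ C := by
    intro x s
    rw [norm_smul, fourier_apply, Circle.norm_coe, one_mul]
    exact hC _
  have under_integral := intervalIntegral.hasDerivAt_integral_of_dominated_loc_of_deriv_le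
    (a := xl) (b := xr) (μ := volume) (bound := fun _ => C)
    (F := fun s x => fourier (-j) (x : AddCircle (xr - xl)) • u (x, s))
    (F' := fun s x => fourier (-j) (x : AddCircle (xr - xl)) • dY u (x, s)) (x₀ := t)
    univ_mem (Eventually.of_forall fun s => (hslice s).aestronglyMeasurable)
    ((hslice t).intervalIntegrable _ _)
    (continuous_fourier_smul_slice _ _ (continuous_dY hu) t).aestronglyMeasurable
    (ae_of_all _ fun x _ s _ => hbound x s) (continuous_const.intervalIntegrable _ _)
    (ae_of_all _ fun x _ s _ => (hasDerivAt_dY hu x s).const_mul _)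
  exact under_integral.2.const_smul (1 / (xr - xl))

lemma deriv_sliceFourierCoeff (xl xr : ℝ) (j : ℤ) (hu : ContDiff ℝ 1 u)
    (hc : HasCompactSupport u) :
    deriv (sliceFourierCoeff xl xr j u) = sliceFourierCoeff xl xr j (dY u) :=
  funext fun t => (hasDerivAt_sliceFourierCoeff xl xr j hu hc t).deriv

lemma contDiff_sliceFourierCoeff (xl xr : ℝ) (j : ℤ) (hu : ContDiff ℝ 1 u)
    (hc : HasCompactSupport u) : ContDiff ℝ 1 (sliceFourierCoeff xl xr j u) := by
  rw [contDiff_one_iff_deriv, deriv_sliceFourierCoeff xl xr j hu hc]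
  exact ⟨fun t => (hasDerivAt_sliceFourierCoeff xl xr j hu hc t).differentiableAt,
    continuous_sliceFourierCoeff xl xr j (continuous_dY hu)⟩

lemma sliceFourierCoeff_dX (j : ℤ) (hu : ContDiff ℝ 1 u)
    (hs : tsupport u ⊆ Prod.fst ⁻¹' Set.Ioo xl xr) (t : ℝ) :
    sliceFourierCoeff xl xr j (dX u) t =
      2 * π * Complex.I * j / ((xr - xl : ℝ) : ℂ) * sliceFourierCoeff xl xr j u t := by
  have hl : u (xl, t) = 0 := image_eq_zero_of_notMem_tsupport fun hm => (hs hm).1.false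
  have hr : u (xr, t) = 0 := image_eq_zero_of_notMem_tsupport fun hm => (hs hm).2.false
  have hexp := continuous_fourier_coe (xr - xl) (-j)
  have hdX := continuous_dX hu
  have by_parts := intervalIntegral.integral_mul_deriv_eq_deriv_mul (a := xl) (b := xr)
    (fun x _ => hasDerivAt_fourier_neg (xr - xl) j x) (fun x _ => hasDerivAt_dX hu x t)
    (Continuous.intervalIntegrable (by fun_prop) _ _)
    (Continuous.intervalIntegrable (by fun_prop) _ _)
  simp only [hl, hr, mul_zero, sub_zero, zero_sub, mul_assoc (_ / _),
    intervalIntegral.integral_const_mul] at by_parts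
  simp only [sliceFourierCoeff, smul_eq_mul, by_parts, Complex.real_smul]
  ring

lemma sliceFourierCoeff_kineticMomentum (κ p b : ℝ) (j : ℤ) (hu : ContDiff ℝ 1 u)
    (hs : tsupport u ⊆ Prod.fst ⁻¹' Set.Ioo xl xr) (t : ℝ) :
    sliceFourierCoeff xl xr j (kineticMomentum κ p b u) t =
      (κ * (2 * π * j / (xr - xl)) + p + b * t) • sliceFourierCoeff xl xr j u t := by
  have := hu.continuous
  have := continuous_dX hu
  have hsplit : kineticMomentum κ p b u = (fun q => (-Complex.I * κ) * dX u q) +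
      fun q => ((p + b * q.2 : ℝ) : ℂ) * u q := by
    ext q
    simp [kineticMomentum]
  rw [hsplit, sliceFourierCoeff_add xl xr j (by fun_prop) (by fun_prop),
    sliceFourierCoeff_mul xl xr j (fun _ => -Complex.I * κ),
    sliceFourierCoeff_mul xl xr j (fun s => ((p + b * s : ℝ) : ℂ)), sliceFourierCoeff_dX j hu hs]
  rw [Complex.real_smul]
  push_cast
  linear_combination (-κ * (2 * π * j / (xr - xl)) * sliceFourierCoeff xl xr j u t) * Complex.I_sq

lemma hasSum_norm_sliceFourierCoeff_sq (hx : xl < xr) (hv : Continuous v) (t : ℝ) :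
    HasSum (fun j => ‖sliceFourierCoeff xl xr j v t‖ ^ 2)
      ((xr - xl)⁻¹ * ∫ x in xl..xr, ‖v (x, t)‖ ^ 2) := by
  have hslice : Continuous fun x => v (x, t) := by fun_prop
  have hL2 : MemLp (fun x => v (x, t)) 2 (volume.restrict (Set.Ioc xl xr)) := by
    rw [memLp_two_iff_integrable_sq_norm hslice.aestronglyMeasurable]
    exact (hslice.norm.pow 2).integrableOn_Ioc
  simpa only [fourierCoeffOn_eq_integral, sliceFourierCoeff, smul_eq_mul] using
    hasSum_sq_fourierCoeffOn hx hL2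

lemma integral_norm_slice_sq (hs : tsupport v ⊆ Prod.fst ⁻¹' Set.Ioo xl xr) (t : ℝ) :
    ∫ x in xl..xr, ‖v (x, t)‖ ^ 2 = ∫ x, ‖v (x, t)‖ ^ 2 := by
  refine intervalIntegral.integral_eq_integral_of_support_subset fun x hxs => ?_
  have hmem : (x, t) ∈ tsupport v := subset_tsupport v fun h0 => hxs (by simp [h0])
  exact Set.Ioo_subset_Ioc_self (hs hmem)

lemma hasSum_integral_norm_sliceFourierCoeff_sq (hx : xl < xr) (hv : Continuous v)
    (hc : HasCompactSupport v) (hs : tsupport v ⊆ Prod.fst ⁻¹' Set.Ioo xl xr) :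
    HasSum (fun j => ∫ t, ‖sliceFourierCoeff xl xr j v t‖ ^ 2)
      ((xr - xl)⁻¹ * ∫ q, ‖v q‖ ^ 2) := by
  have hintegrable : Integrable (fun q => ‖v q‖ ^ 2) ((volume : Measure ℝ).prod volume) :=
    integrable_norm_sq_of_hasCompactSupport hv hc
  have parseval : ∀ t, HasSum (fun j => ‖sliceFourierCoeff xl xr j v t‖ ^ 2)
      ((xr - xl)⁻¹ * ∫ x, ‖v (x, t)‖ ^ 2) := fun t =>
    integral_norm_slice_sq hs t ▸ hasSum_norm_sliceFourierCoeff_sq hx hv t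
  rw [Measure.volume_eq_prod, integral_prod_symm _ hintegrable, ← integral_const_mul]
  refine hasSum_integral_of_dominated_convergence
    (fun j t => ‖sliceFourierCoeff xl xr j v t‖ ^ 2)
    (fun j => ((continuous_sliceFourierCoeff xl xr j hv).norm.pow 2).aestronglyMeasurable)
    (fun j => ae_of_all _ fun t => by simp) (ae_of_all _ fun t => (parseval t).summable) ?_
    (ae_of_all _ parseval)
  simp only [(parseval _).tsum_eq]
  exact hintegrable.integral_prod_right.const_mul _

theorem hasSum_oscillatorEnergy_sliceFourierCoeff (κ p b : ℝ) (hx : xl < xr) (hu : ContDiff ℝ 1 u)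
    (hc : HasCompactSupport u) (hs : tsupport u ⊆ Prod.fst ⁻¹' Set.Ioo xl xr) :
    HasSum (fun j : ℤ => oscillatorEnergy (κ * (2 * π * j / (xr - xl)) + p) b
      (sliceFourierCoeff xl xr j u)) ((xr - xl)⁻¹ * landauEnergy κ p b u) := by
  have hdY := continuous_dY hu
  have hmom := continuous_kineticMomentum κ p b hu
  have hdYc := hasCompactSupport_dY hc
  have hmomc := hasCompactSupport_kineticMomentum κ p b hc
  have split : ∀ j : ℤ, oscillatorEnergy (κ * (2 * π * j / (xr - xl)) + p) b
      (sliceFourierCoeff xl xr j u) =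
      (∫ t, ‖sliceFourierCoeff xl xr j (kineticMomentum κ p b u) t‖ ^ 2) +
        ∫ t, ‖sliceFourierCoeff xl xr j (dY u) t‖ ^ 2 := fun j => by
    rw [oscillatorEnergy, deriv_sliceFourierCoeff xl xr j hu hc, add_comm (integral _ _),
      ← integral_add]
    · simp only [sliceFourierCoeff_kineticMomentum κ p b j hu hs]
    · exact integrable_norm_sq_of_hasCompactSupport (continuous_sliceFourierCoeff xl xr j hdY)
        (hasCompactSupport_sliceFourierCoeff xl xr j hdYc)
    · exact integrable_norm_sq_of_hasCompactSupport (continuous_sliceFourierCoeff xl xr j hmom)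
        (hasCompactSupport_sliceFourierCoeff xl xr j hmomc)
  rw [funext split, landauEnergy, integral_add (integrable_norm_kineticMomentum_sq κ p b hu hc)
    (integrable_norm_dY_sq hu hc), mul_add]
  exact (hasSum_integral_norm_sliceFourierCoeff_sq hx hmom hmomc
    ((tsupport_kineticMomentum_subset κ p b u).trans hs)).add
    (hasSum_integral_norm_sliceFourierCoeff_sq hx hdY hdYc ((tsupport_dY_subset u).trans hs))

end SliceFourier

section FluxBound

/-- A finite-dimensional space of test functions on `Ω` whose Landau energies are below `μ`. The
largest dimension of such a space is the Dirichlet counting function at `μ`. -/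
structure IsTrialSpace (κ p b μ : ℝ) (Ω : Set (ℝ × ℝ)) (V : Submodule ℂ (ℝ × ℝ → ℂ)) : Prop where
  finiteDimensional : FiniteDimensional ℂ V
  isTestOn : ∀ u ∈ V, IsTestOn Ω u
  energy_lt : ∀ u ∈ V, u ≠ 0 → landauEnergy κ p b u < μ * ∫ q, ‖u q‖ ^ 2

lemma IsTestOn.contDiff_one {Ω : Set (ℝ × ℝ)} {u : ℝ × ℝ → ℂ} (h : IsTestOn Ω u) :
    ContDiff ℝ 1 u :=
  h.1.of_le (mod_cast le_top)

variable {κ p b μ xl xr : ℝ}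

lemma mul_integral_norm_sq_le_oscillatorEnergy_of_le {E : Type*} [NormedAddCommGroup E]
    [NormedSpace ℝ E] {γ : ℝ} {f : ℝ → E} (hf : ContDiff ℝ 1 f) (hc : HasCompactSupport f)
    (hγ : ∀ t, f t ≠ 0 → γ ≤ (p + b * t) ^ 2) :
    γ * ∫ t, ‖f t‖ ^ 2 ≤ oscillatorEnergy p b f := by
  rw [oscillatorEnergy, ← integral_const_mul]
  refine integral_mono
    ((integrable_norm_sq_of_hasCompactSupport hf.continuous hc).const_mul γ)
    (integrable_oscillatorEnergy p b hf hc) fun t => ?_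
  simp only [norm_smul, mul_pow, norm_eq_abs, sq_abs]
  rcases eq_or_ne (f t) 0 with h0 | h0
  · simp [h0]
  · nlinarith [mul_le_mul_of_nonneg_right (hγ t h0) (sq_nonneg ‖f t‖), sq_nonneg ‖deriv f t‖]

lemma mul_integral_norm_sq_le_landauEnergy {γ : ℝ} (hx : xl < xr) {u : ℝ × ℝ → ℂ}
    (hu : ContDiff ℝ 1 u) (hc : HasCompactSupport u)
    (hs : tsupport u ⊆ Prod.fst ⁻¹' Set.Ioo xl xr)
    (hγ : ∀ j : ℤ, γ * ∫ t, ‖sliceFourierCoeff xl xr j u t‖ ^ 2 ≤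
      oscillatorEnergy (κ * (2 * π * j / (xr - xl)) + p) b (sliceFourierCoeff xl xr j u)) :
    γ * ∫ q, ‖u q‖ ^ 2 ≤ landauEnergy κ p b u := by
  have hle := hasSum_le hγ
    ((hasSum_integral_norm_sliceFourierCoeff_sq hx hu.continuous hc hs).mul_left γ)
    (hasSum_oscillatorEnergy_sliceFourierCoeff κ p b hx hu hc hs)
  rw [mul_left_comm] at hle
  exact le_of_mul_le_mul_left hle (inv_pos.2 (sub_pos.2 hx))

lemma exists_linearMap_eq_integral_smul_sliceFourierCoeff (xl xr : ℝ) (j : ℤ) {h : ℝ → ℝ}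
    (hh : Continuous h) {V : Submodule ℂ (ℝ × ℝ → ℂ)}
    (hV : ∀ u ∈ V, Continuous u ∧ HasCompactSupport u) :
    ∃ ℓ : V →ₗ[ℂ] ℂ, ∀ u : V, ℓ u = ∫ t, h t • sliceFourierCoeff xl xr j u t := by
  have hintegrable : ∀ u : V, Integrable fun t => h t • sliceFourierCoeff xl xr j u t := fun u => by
    have := continuous_sliceFourierCoeff xl xr j (hV u u.2).1
    exact Continuous.integrable_of_hasCompactSupport (by fun_prop)
      ((hasCompactSupport_sliceFourierCoeff xl xr j (hV u u.2).2).smul_left (f := h))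
  have hsmul : ∀ (c : ℂ) (u : V) t, sliceFourierCoeff xl xr j (c • u : V) t =
      c • sliceFourierCoeff xl xr j u t := fun c u => sliceFourierCoeff_mul xl xr j (fun _ => c) u
  refine ⟨IsLinearMap.mk' (fun u : V => ∫ t, h t • sliceFourierCoeff xl xr j u t)
    ⟨fun u v => ?_, fun c u => ?_⟩, fun _ => rfl⟩
  · simp only [Submodule.coe_add, sliceFourierCoeff_add xl xr j (hV u u.2).1 (hV v v.2).1, smul_add]
    exact integral_add (hintegrable u) (hintegrable v)
  · simp only [hsmul, smul_comm _ c]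
    exact integral_smul c _

lemma finrank_le_card_mul_of_isTrialSpace (hx : xl < xr) (hb : b ≠ 0) {tl tr : ℝ}
    {V : Submodule ℂ (ℝ × ℝ → ℂ)}
    (hV : IsTrialSpace κ p b μ (Set.Ioo xl xr ×ˢ Set.Ioo tl tr) V) {M : ℕ}
    (hM : μ ≤ (2 * M + 1) * |b|) (J : Finset ℤ)
    (hJ : ∀ j ∉ J, ∀ t ∈ Set.Ioo tl tr,
      (2 * M + 1) * |b| ≤ (κ * (2 * π * j / (xr - xl)) + p + b * t) ^ 2) :
    Module.finrank ℂ V ≤ J.card * M := by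
  have := hV.finiteDimensional
  choose h hh gap using fun j : ℤ =>
    exists_oscillatorEnergy_ge (E := ℂ) (κ * (2 * π * j / (xr - xl)) + p) hb M
  choose ℓ hℓ using fun i : J × Fin M => exists_linearMap_eq_integral_smul_sliceFourierCoeff
    xl xr i.1 (hh i.1 i.2) fun u hu => ⟨(hV.isTestOn u hu).1.continuous, (hV.isTestOn u hu).2.1⟩
  by_contra! hlt
  have hker : LinearMap.ker (LinearMap.pi ℓ) ≠ ⊥ :=
    LinearMap.ker_ne_bot_of_finrank_lt (by simpa using hlt)
  obtain ⟨u, huker, hu0⟩ := Submodule.exists_mem_ne_zero_of_ne_bot hker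
  have huc := (hV.isTestOn u u.2).contDiff_one
  obtain ⟨-, hc, hs⟩ := hV.isTestOn u u.2
  have hγ : ∀ j : ℤ, (2 * M + 1) * |b| * ∫ t, ‖sliceFourierCoeff xl xr j u t‖ ^ 2 ≤
      oscillatorEnergy (κ * (2 * π * j / (xr - xl)) + p) b (sliceFourierCoeff xl xr j u) := by
    intro j
    have hfc := hasCompactSupport_sliceFourierCoeff xl xr j hc
    have hf := contDiff_sliceFourierCoeff xl xr j huc hc
    by_cases hj : j ∈ J
    · refine gap j _ hf hfc fun k => ?_
      rw [← hℓ (⟨j, hj⟩, k)]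
      exact congrFun (LinearMap.mem_ker.1 huker) _
    · refine mul_integral_norm_sq_le_oscillatorEnergy_of_le hf hfc fun t ht => hJ j hj t ?_
      obtain ⟨q, hq, rfl⟩ := not_imp_comm.1 (sliceFourierCoeff_eq_zero_of_notMem xl xr j) ht
      exact (hs hq).2
  have hle := mul_integral_norm_sq_le_landauEnergy hx huc hc (fun q hq => (hs hq).1) hγ
  have hlow := hV.energy_lt u u.2 (by simpa using hu0)
  have hnonneg : 0 ≤ ∫ q, ‖(u : ℝ × ℝ → ℂ) q‖ ^ 2 := integral_nonneg fun q => sq_nonneg _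
  exact (hle.trans_lt hlow).not_ge (mul_le_mul_of_nonneg_right hM hnonneg)

lemma exists_finset_int_forall_notMem_le_abs {ω : ℝ} (hω : 0 < ω) (c : ℝ) {R : ℝ} (hR : 0 ≤ R) :
    ∃ J : Finset ℤ, (J.card : ℝ) ≤ 2 * R / ω + 1 ∧ ∀ j ∉ J, R ≤ |ω * j + c| := by
  refine ⟨Finset.Icc ⌈(-R - c) / ω⌉ ⌊(R - c) / ω⌋, ?_, fun j hj => ?_⟩
  · have hfloor := Int.floor_le ((R - c) / ω)
    have hceil := Int.le_ceil ((-R - c) / ω)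
    have hlen : (R - c) / ω - (-R - c) / ω = 2 * R / ω := by ring
    have hnonneg : 0 ≤ 2 * R / ω := by positivity
    have hcard : (((⌊(R - c) / ω⌋ + 1 - ⌈(-R - c) / ω⌉).toNat : ℤ) : ℝ) ≤ 2 * R / ω + 1 := by
      rw [Int.toNat_eq_max]
      push_cast
      exact max_le (by linarith) (by linarith)
    rw [Int.card_Icc]
    exact_mod_cast hcard
  · contrapose! hj
    rw [abs_lt] at hj
    rw [Finset.mem_Icc, Int.ceil_le, Int.le_floor, div_le_iff₀ hω, le_div_iff₀ hω]
    constructor <;> linarith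

lemma exists_finset_int_forall_notMem_le_sq {ω : ℝ} (hω : 0 < ω) (p b : ℝ) {tl tr : ℝ}
    (ht : tl ≤ tr) (γ : ℝ) :
    ∃ J : Finset ℤ, (J.card : ℝ) ≤ |b| * (tr - tl) / ω + (2 * √γ / ω + 1) ∧
      ∀ j ∉ J, ∀ t ∈ Set.Ioo tl tr, γ ≤ (ω * j + p + b * t) ^ 2 := by
  have := sub_nonneg.2 ht
  obtain ⟨J, hcard, hJ⟩ := exists_finset_int_forall_notMem_le_abs hω (p + b * ((tl + tr) / 2))
    (R := √γ + |b| * ((tr - tl) / 2)) (by positivity)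
  refine ⟨J, hcard.trans (by ring_nf; rfl), fun j hj t htj => ?_⟩
  have hdist : |b * (t - (tl + tr) / 2)| ≤ |b| * ((tr - tl) / 2) := by
    rw [abs_mul]
    gcongr
    rw [abs_le]
    constructor <;> linarith [htj.1, htj.2]
  have hsqrt : √γ ≤ |ω * j + p + b * t| := by
    have htri := abs_sub_abs_le_abs_sub (ω * j + (p + b * ((tl + tr) / 2)))
      (-(b * (t - (tl + tr) / 2)))
    rw [abs_neg, show ω * j + (p + b * ((tl + tr) / 2)) - -(b * (t - (tl + tr) / 2)) =
      ω * j + p + b * t by ring] at htri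
    linarith [hJ j hj]
  rw [← sq_abs]
  exact (Real.sqrt_le_left (abs_nonneg _)).1 hsqrt

theorem finrank_le_of_isTrialSpace (hκ : 0 < κ) (hx : xl < xr) (hb : b ≠ 0) {tl tr : ℝ}
    (ht : tl ≤ tr) {V : Submodule ℂ (ℝ × ℝ → ℂ)}
    (hV : IsTrialSpace κ p b μ (Set.Ioo xl xr ×ˢ Set.Ioo tl tr) V) {M : ℕ}
    (hM : μ ≤ (2 * M + 1) * |b|) :
    (Module.finrank ℂ V : ℝ) ≤ (|b| * (tr - tl) / (κ * (2 * π / (xr - xl))) +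
      (2 * √((2 * M + 1) * |b|) / (κ * (2 * π / (xr - xl))) + 1)) * M := by
  have := sub_pos.2 hx
  obtain ⟨J, hcard, hJ⟩ := exists_finset_int_forall_notMem_le_sq
    (ω := κ * (2 * π / (xr - xl))) (by positivity) p b ht
    ((2 * M + 1) * |b|)
  have hfreq : ∀ j : ℤ, κ * (2 * π * j / (xr - xl)) = κ * (2 * π / (xr - xl)) * j :=
    fun j => by ring
  have hle := finrank_le_card_mul_of_isTrialSpace hx hb hV hM J (by simpa only [hfreq] using hJ)
  calc (Module.finrank ℂ V : ℝ) ≤ J.card * M := mod_cast hle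
    _ ≤ _ := by gcongr

end FluxBound

section Superadditivity

lemma norm_add_sq_of_disjoint_support {X E : Type*} [NormedAddCommGroup E] {f g : X → E}
    (hd : Disjoint (Function.support f) (Function.support g)) (x : X) :
    ‖f x + g x‖ ^ 2 = ‖f x‖ ^ 2 + ‖g x‖ ^ 2 := by
  rcases eq_or_ne (f x) 0 with hf | hf
  · simp [hf]
  · have hg : g x = 0 := Function.notMem_support.1 (Set.disjoint_left.1 hd hf)
    simp [hg]

variable {κ p b μ : ℝ} {Ω Ω₁ Ω₂ : Set (ℝ × ℝ)} {u v : ℝ × ℝ → ℂ}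
  {V V₁ V₂ : Submodule ℂ (ℝ × ℝ → ℂ)}

lemma landauEnergy_zero (κ p b : ℝ) : landauEnergy κ p b 0 = 0 := by
  simp [landauEnergy, kineticMomentum, dX, dY]

lemma landauEnergy_add_of_disjoint_tsupport (κ p b : ℝ) (hu : ContDiff ℝ 1 u)
    (hv : ContDiff ℝ 1 v) (huc : HasCompactSupport u) (hvc : HasCompactSupport v)
    (hd : Disjoint (tsupport u) (tsupport v)) :
    landauEnergy κ p b (u + v) = landauEnergy κ p b u + landauEnergy κ p b v := by
  have hfderiv : ∀ q, fderiv ℝ (u + v) q = fderiv ℝ u q + fderiv ℝ v q := fun q =>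
    fderiv_add (hu.differentiable one_ne_zero q) (hv.differentiable one_ne_zero q)
  have hmom : ∀ q, kineticMomentum κ p b (u + v) q =
      kineticMomentum κ p b u q + kineticMomentum κ p b v q := fun q => by
    simp only [kineticMomentum, dX, hfderiv, add_apply, Pi.add_apply, smul_add]
    ring
  have hdY : ∀ q, dY (u + v) q = dY u q + dY v q := fun q => by simp [dY, hfderiv]
  have hmom_disj := hd.mono ((subset_tsupport _).trans (tsupport_kineticMomentum_subset κ p b u))
    ((subset_tsupport _).trans (tsupport_kineticMomentum_subset κ p b v))
  have hdY_disj := hd.mono ((subset_tsupport _).trans (tsupport_dY_subset u))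
    ((subset_tsupport _).trans (tsupport_dY_subset v))
  simp only [landauEnergy]
  rw [← integral_add (integrable_landauEnergy κ p b hu huc) (integrable_landauEnergy κ p b hv hvc)]
  congr 1 with q
  rw [hmom, hdY, norm_add_sq_of_disjoint_support hmom_disj,
    norm_add_sq_of_disjoint_support hdY_disj]
  ring

lemma integral_norm_add_sq_of_disjoint_tsupport (hu : Continuous u) (hv : Continuous v)
    (huc : HasCompactSupport u) (hvc : HasCompactSupport v)
    (hd : Disjoint (tsupport u) (tsupport v)) :
    ∫ q, ‖(u + v) q‖ ^ 2 = (∫ q, ‖u q‖ ^ 2) + ∫ q, ‖v q‖ ^ 2 := by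
  rw [← integral_add (integrable_norm_sq_of_hasCompactSupport hu huc)
    (integrable_norm_sq_of_hasCompactSupport hv hvc)]
  congr 1 with q
  exact norm_add_sq_of_disjoint_support
    (hd.mono (subset_tsupport u) (subset_tsupport v)) q

lemma IsTestOn.mono (hu : IsTestOn Ω₁ u) (hΩ : Ω₁ ⊆ Ω₂) : IsTestOn Ω₂ u :=
  ⟨hu.1, hu.2.1, hu.2.2.trans hΩ⟩

lemma IsTestOn.add (hu : IsTestOn Ω u) (hv : IsTestOn Ω v) : IsTestOn Ω (u + v) :=
  ⟨hu.1.add hv.1, hu.2.1.add hv.2.1, (tsupport_add u v).trans (Set.union_subset hu.2.2 hv.2.2)⟩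

namespace IsTrialSpace

lemma mono (hV : IsTrialSpace κ p b μ Ω₁ V) (hΩ : Ω₁ ⊆ Ω₂) : IsTrialSpace κ p b μ Ω₂ V :=
  ⟨hV.finiteDimensional, fun u hu => (hV.isTestOn u hu).mono hΩ, hV.energy_lt⟩

lemma bot (κ p b μ : ℝ) (Ω : Set (ℝ × ℝ)) : IsTrialSpace κ p b μ Ω ⊥ where
  finiteDimensional := inferInstance
  isTestOn u hu := by
    rw [(Submodule.mem_bot ℂ).1 hu]
    exact ⟨contDiff_const, HasCompactSupport.zero, by simp⟩
  energy_lt u hu hu0 := absurd ((Submodule.mem_bot ℂ).1 hu) hu0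

lemma energy_le (hV : IsTrialSpace κ p b μ Ω V) (hu : u ∈ V) :
    landauEnergy κ p b u ≤ μ * ∫ q, ‖u q‖ ^ 2 := by
  rcases eq_or_ne u 0 with rfl | hu0
  · simp [landauEnergy_zero]
  · exact (hV.energy_lt u hu hu0).le

lemma sup (h₁ : IsTrialSpace κ p b μ Ω₁ V₁) (h₂ : IsTrialSpace κ p b μ Ω₂ V₂)
    (hd : Disjoint Ω₁ Ω₂) : IsTrialSpace κ p b μ (Ω₁ ∪ Ω₂) (V₁ ⊔ V₂) where
  finiteDimensional :=
    have := h₁.finiteDimensional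
    have := h₂.finiteDimensional
    inferInstance
  isTestOn w hw := by
    obtain ⟨u, hu, v, hv, rfl⟩ := Submodule.mem_sup.1 hw
    exact ((h₁.isTestOn u hu).mono Set.subset_union_left).add
      ((h₂.isTestOn v hv).mono Set.subset_union_right)
  energy_lt w hw hw0 := by
    obtain ⟨u, hu, v, hv, rfl⟩ := Submodule.mem_sup.1 hw
    have hut := h₁.isTestOn u hu
    have hvt := h₂.isTestOn v hv
    have hdisj := hd.mono hut.2.2 hvt.2.2
    rw [landauEnergy_add_of_disjoint_tsupport κ p b hut.contDiff_one hvt.contDiff_one hut.2.1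
      hvt.2.1 hdisj, integral_norm_add_sq_of_disjoint_tsupport hut.1.continuous hvt.1.continuous
      hut.2.1 hvt.2.1 hdisj, mul_add]
    rcases eq_or_ne u 0 with hu0 | hu0
    · have hv0 : v ≠ 0 := fun hv0 => hw0 (by simp [hu0, hv0])
      exact add_lt_add_of_le_of_lt (h₁.energy_le hu) (h₂.energy_lt v hv hv0)
    · exact add_lt_add_of_lt_of_le (h₁.energy_lt u hu hu0) (h₂.energy_le hv)

lemma finrank_sup (h₁ : IsTrialSpace κ p b μ Ω₁ V₁) (h₂ : IsTrialSpace κ p b μ Ω₂ V₂)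
    (hd : Disjoint Ω₁ Ω₂) :
    Module.finrank ℂ (V₁ ⊔ V₂ : Submodule ℂ (ℝ × ℝ → ℂ)) =
      Module.finrank ℂ V₁ + Module.finrank ℂ V₂ := by
  have := h₁.finiteDimensional
  have := h₂.finiteDimensional
  have hinf : V₁ ⊓ V₂ = ⊥ := by
    refine (Submodule.eq_bot_iff _).2 fun u ⟨hu₁, hu₂⟩ => tsupport_eq_empty_iff.1 ?_
    exact disjoint_self.1 (hd.mono (h₁.isTestOn u hu₁).2.2 (h₂.isTestOn u hu₂).2.2)
  have := Submodule.finrank_sup_add_finrank_inf_eq V₁ V₂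
  rwa [hinf, finrank_bot, add_zero] at this

end IsTrialSpace

end Superadditivity

section MagneticTranslation

/-- Translation by `h` in the `t`-direction, followed by the gauge transformation that restores
the Landau gauge; it commutes with the Landau Hamiltonian. -/
def magneticTranslation (κ b h : ℝ) : (ℝ × ℝ → ℂ) →ₗ[ℂ] ℝ × ℝ → ℂ where
  toFun u q := Complex.exp ((-(b * h / κ * q.1) : ℝ) * Complex.I) * u (q - (0, h))
  map_add' _ _ := funext fun _ => mul_add _ _ _
  map_smul' _ _ := funext fun _ => mul_left_comm _ _ _

variable {κ p b μ : ℝ} {Ω : Set (ℝ × ℝ)} {u : ℝ × ℝ → ℂ} {V : Submodule ℂ (ℝ × ℝ → ℂ)}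

lemma magneticTranslation_apply (κ b h : ℝ) (u : ℝ × ℝ → ℂ) (q : ℝ × ℝ) :
    magneticTranslation κ b h u q =
      Complex.exp ((-(b * h / κ * q.1) : ℝ) * Complex.I) * u (q - (0, h)) := rfl

lemma norm_magneticTranslation (κ b h : ℝ) (u : ℝ × ℝ → ℂ) (q : ℝ × ℝ) :
    ‖magneticTranslation κ b h u q‖ = ‖u (q - (0, h))‖ := by
  rw [magneticTranslation_apply, norm_mul, Complex.norm_exp_ofReal_mul_I, one_mul]

lemma magneticTranslation_injective (κ b h : ℝ) :
    Function.Injective (magneticTranslation κ b h) := by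
  refine (injective_iff_map_eq_zero _).2 fun u hu => funext fun q => ?_
  have hnorm := norm_magneticTranslation κ b h u (q + (0, h))
  rwa [hu, add_sub_cancel_right, Pi.zero_apply, norm_zero, eq_comm, norm_eq_zero] at hnorm

lemma contDiff_magneticTranslation (κ b h : ℝ) {n : WithTop ℕ∞} (hu : ContDiff ℝ n u) :
    ContDiff ℝ n (magneticTranslation κ b h u) := by
  have harg : ContDiff ℝ n fun q : ℝ × ℝ => -(b * h / κ * q.1) := by fun_prop
  have hphase : ContDiff ℝ n fun q : ℝ × ℝ => ((-(b * h / κ * q.1) : ℝ) : ℂ) :=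
    Complex.ofRealCLM.contDiff.comp harg
  exact ((hphase.mul contDiff_const).cexp).mul (hu.comp (by fun_prop))

lemma IsTestOn.magneticTranslation (κ b h : ℝ) (hu : IsTestOn Ω u) :
    IsTestOn ((· - ((0 : ℝ), h)) ⁻¹' Ω) (magneticTranslation κ b h u) := by
  refine ⟨contDiff_magneticTranslation κ b h hu.1,
    (hu.2.1.comp_homeomorph (Homeomorph.subRight ((0 : ℝ), h))).mul_left, ?_⟩
  exact tsupport_mul_subset_right.trans ((tsupport_comp_subset_preimage u (by fun_prop)).trans
    (Set.preimage_mono hu.2.2))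

lemma dX_magneticTranslation (κ b h : ℝ) (hu : ContDiff ℝ 1 u) (q : ℝ × ℝ) :
    dX (magneticTranslation κ b h u) q =
      Complex.exp ((-(b * h / κ * q.1) : ℝ) * Complex.I) *
        (dX u (q - (0, h)) - Complex.I * (b * h / κ) * u (q - (0, h))) := by
  obtain ⟨x, t⟩ := q
  have hphase := ((hasDerivAt_id x).const_mul (b * h / κ)).neg.ofReal_comp.mul_const Complex.I
  have hslice : HasDerivAt (fun y => u ((y, t) - (0, h))) (dX u ((x, t) - (0, h))) x := by
    simpa using hasDerivAt_dX hu x (t - h)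
  refine (hasDerivAt_dX (contDiff_magneticTranslation κ b h hu) x t).unique
    ((hphase.cexp.mul hslice).congr_deriv ?_)
  simp only [id, Pi.neg_apply, mul_one]
  push_cast
  ring

lemma dY_magneticTranslation (κ b h : ℝ) (hu : ContDiff ℝ 1 u) (q : ℝ × ℝ) :
    dY (magneticTranslation κ b h u) q =
      Complex.exp ((-(b * h / κ * q.1) : ℝ) * Complex.I) * dY u (q - (0, h)) := by
  obtain ⟨x, t⟩ := q
  have hslice : HasDerivAt (fun s => u ((x, s) - (0, h))) (dY u ((x, t) - (0, h))) t := by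
    simpa using (hasDerivAt_dY hu x (t - h)).comp_sub_const t h
  exact (hasDerivAt_dY (contDiff_magneticTranslation κ b h hu) x t).unique
    (hslice.const_mul (Complex.exp ((-(b * h / κ * x) : ℝ) * Complex.I)))

lemma kineticMomentum_magneticTranslation (hκ : κ ≠ 0) (p b h : ℝ) (hu : ContDiff ℝ 1 u)
    (q : ℝ × ℝ) :
    kineticMomentum κ p b (magneticTranslation κ b h u) q =
      Complex.exp ((-(b * h / κ * q.1) : ℝ) * Complex.I) *
        kineticMomentum κ p b u (q - (0, h)) := by
  have hκ' : (κ : ℂ) ≠ 0 := mod_cast hκ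
  simp only [kineticMomentum, dX_magneticTranslation κ b h hu, magneticTranslation_apply,
    Complex.real_smul, Prod.snd_sub]
  generalize Complex.exp _ = e
  push_cast
  field_simp
  linear_combination (e * b * h * u (q - (0, h))) * Complex.I_sq

lemma landauEnergy_magneticTranslation (hκ : κ ≠ 0) (p b h : ℝ) (hu : ContDiff ℝ 1 u) :
    landauEnergy κ p b (magneticTranslation κ b h u) = landauEnergy κ p b u := by
  simp only [landauEnergy, kineticMomentum_magneticTranslation hκ p b h hu,
    dY_magneticTranslation κ b h hu, norm_mul, Complex.norm_exp_ofReal_mul_I, one_mul]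
  exact integral_sub_right_eq_self
    (fun q => ‖kineticMomentum κ p b u q‖ ^ 2 + ‖dY u q‖ ^ 2) ((0 : ℝ), h)

lemma integral_norm_magneticTranslation_sq (κ b h : ℝ) (u : ℝ × ℝ → ℂ) :
    ∫ q, ‖magneticTranslation κ b h u q‖ ^ 2 = ∫ q, ‖u q‖ ^ 2 := by
  simp only [norm_magneticTranslation]
  exact integral_sub_right_eq_self (fun q => ‖u q‖ ^ 2) ((0 : ℝ), h)

namespace IsTrialSpace

lemma map_magneticTranslation (hκ : κ ≠ 0) (h : ℝ) (hV : IsTrialSpace κ p b μ Ω V) :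
    IsTrialSpace κ p b μ ((· - ((0 : ℝ), h)) ⁻¹' Ω) (V.map (magneticTranslation κ b h)) where
  finiteDimensional :=
    have := hV.finiteDimensional
    inferInstance
  isTestOn := by
    rintro _ ⟨u, hu, rfl⟩
    exact (hV.isTestOn u hu).magneticTranslation κ b h
  energy_lt := by
    rintro _ ⟨u, hu, rfl⟩ hne
    rw [landauEnergy_magneticTranslation hκ p b h (hV.isTestOn u hu).contDiff_one,
      integral_norm_magneticTranslation_sq]
    exact hV.energy_lt u hu fun hu0 => hne (by rw [hu0, map_zero])

lemma exists_stack (hκ : κ ≠ 0) {xl xr tl tr : ℝ} (ht : tl ≤ tr)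
    (hV : IsTrialSpace κ p b μ (Set.Ioo xl xr ×ˢ Set.Ioo tl tr) V) (N : ℕ) :
    ∃ W : Submodule ℂ (ℝ × ℝ → ℂ),
      IsTrialSpace κ p b μ (Set.Ioo xl xr ×ˢ Set.Ioo tl (tl + N * (tr - tl))) W ∧
        Module.finrank ℂ W = N * Module.finrank ℂ V := by
  induction N with
  | zero => exact ⟨⊥, bot κ p b μ _, by simp⟩
  | succ N ih =>
    obtain ⟨W, hW, hfinrank⟩ := ih
    have htrans := hV.map_magneticTranslation hκ (N * (tr - tl))
    have hdisj : Disjoint (Set.Ioo xl xr ×ˢ Set.Ioo tl (tl + N * (tr - tl)))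
        ((· - ((0 : ℝ), N * (tr - tl))) ⁻¹' (Set.Ioo xl xr ×ˢ Set.Ioo tl tr)) :=
      Set.disjoint_left.2 fun q hq hq' => by linarith [hq.2.2, show tl < q.2 - _ from hq'.2.1]
    refine ⟨_, (hW.sup htrans hdisj).mono ?_, ?_⟩
    · have hstack : (0 : ℝ) ≤ N * (tr - tl) := mul_nonneg N.cast_nonneg (sub_nonneg.2 ht)
      rintro ⟨x, t⟩ (⟨hqx, hqt⟩ | ⟨hqx, hqt⟩) <;>
        simp only [Set.mem_prod, Set.mem_Ioo, Prod.fst_sub, Prod.snd_sub, sub_zero] at * <;>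
        push_cast <;> refine ⟨hqx, ?_, ?_⟩ <;> linarith
    · rw [hW.finrank_sup htrans hdisj, hfinrank, Nat.succ_mul,
        (Submodule.equivMapOfInjective _ (magneticTranslation_injective κ b _) V).finrank_eq]

end IsTrialSpace

end MagneticTranslation

section CountingFunction

lemma le_of_forall_nat_mul_le_mul_add {x y C : ℝ} (h : ∀ N : ℕ, N * x ≤ N * y + C) : x ≤ y := by
  by_contra! hlt
  obtain ⟨N, hN⟩ := exists_nat_gt (C / (x - y))
  rw [div_lt_iff₀ (sub_pos.2 hlt), mul_sub] at hN
  linarith [h N]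

theorem IsTrialSpace.finrank_le_flux_mul {κ p b μ xl xr tl tr : ℝ} (hκ : 0 < κ) (hx : xl < xr)
    (hb : b ≠ 0) (ht : tl ≤ tr) {V : Submodule ℂ (ℝ × ℝ → ℂ)}
    (hV : IsTrialSpace κ p b μ (Set.Ioo xl xr ×ˢ Set.Ioo tl tr) V) {M : ℕ}
    (hM : μ ≤ (2 * M + 1) * |b|) :
    (Module.finrank ℂ V : ℝ) ≤ (xr - xl) * (tr - tl) * |b| / (2 * π * κ) * M := by
  -- Stacking `N` magnetic translates of `V` multiplies both the dimension and the flux by `N`, but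
  -- leaves the boundary term `C` unchanged.
  refine le_of_forall_nat_mul_le_mul_add
    (C := (2 * √((2 * M + 1) * |b|) / (κ * (2 * π / (xr - xl))) + 1) * M) fun N => ?_
  obtain ⟨W, hW, hfinrank⟩ := hV.exists_stack hκ.ne' ht N
  have hstack : tl ≤ tl + N * (tr - tl) :=
    le_add_of_nonneg_right (mul_nonneg N.cast_nonneg (sub_nonneg.2 ht))
  have hle := finrank_le_of_isTrialSpace hκ hx hb hstack hW hM
  have hflux : |b| * (tl + N * (tr - tl) - tl) / (κ * (2 * π / (xr - xl))) =
      N * ((xr - xl) * (tr - tl) * |b| / (2 * π * κ)) := by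
    have := (sub_pos.2 hx).ne'
    field_simp
    ring
  rwa [hfinrank, hflux, Nat.cast_mul, add_mul, mul_assoc (N : ℝ)] at hle

lemma exists_tsum_heav_eq_natCast (μ : ℝ) {β : ℝ} (hβ : 0 < β) :
    ∃ M : ℕ, ∑' k : ℕ, heav (μ - (2 * (k : ℝ) + 1) * β) = M ∧ μ ≤ (2 * M + 1) * β := by
  have hlt : ∀ k : ℕ, k < ⌈(μ / β - 1) / 2⌉₊ ↔ 0 < μ - (2 * (k : ℝ) + 1) * β := fun k => by
    rw [Nat.lt_ceil, lt_div_iff₀ two_pos, lt_sub_iff_add_lt, lt_div_iff₀ hβ, sub_pos,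
      mul_comm (k : ℝ) 2]
  refine ⟨⌈(μ / β - 1) / 2⌉₊, ?_, sub_nonpos.1 (not_lt.1 ((hlt _).not.1 (lt_irrefl _)))⟩
  rw [tsum_eq_sum (s := Finset.range ⌈(μ / β - 1) / 2⌉₊)]
  · have hone : ∀ k ∈ Finset.range ⌈(μ / β - 1) / 2⌉₊, heav (μ - (2 * (k : ℝ) + 1) * β) = 1 :=
      fun k hk => if_pos ((hlt k).1 (Finset.mem_range.1 hk))
    simp [Finset.sum_congr rfl hone]
  · exact fun k hk => if_neg fun hpos => hk (Finset.mem_range.2 ((hlt k).2 hpos))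

variable {q q' nsq nsq' : (ℝ × ℝ → ℂ) → ℝ} {dom : Set (ℝ × ℝ → ℂ)} {lam lam' : ℝ}

lemma NN_le_of_forall_finrank_le {B : ℝ} (hB : 0 ≤ B)
    (h : ∀ V : Submodule ℂ (ℝ × ℝ → ℂ), FiniteDimensional ℂ V → (∀ u ∈ V, u ∈ dom) →
      (∀ u ∈ V, u ≠ 0 → q u < lam * nsq u) → (Module.finrank ℂ V : ℝ) ≤ B) :
    (NN q dom nsq lam : ℝ) ≤ B := by
  refine (Nat.le_floor_iff hB).1 (csSup_le' ?_)
  rintro _ ⟨V, hdom, rfl, hlt⟩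
  refine Nat.le_floor ?_
  rcases Nat.eq_zero_or_pos (Module.finrank ℂ V) with hzero | hpos
  · -- This case covers infinite-dimensional `V`, where `finrank` is `0` by convention.
    rwa [hzero, Nat.cast_zero]
  · exact h V (Module.finite_of_finrank_pos hpos) hdom hlt

lemma NN_congr (h : ∀ u ∈ dom, q u < lam * nsq u ↔ q' u < lam' * nsq' u) :
    NN q dom nsq lam = NN q' dom nsq' lam' := by
  refine congrArg sSup (Set.ext fun n => exists_congr fun V => and_congr_right fun hV => ?_)
  exact and_congr_right fun _ => forall₂_congr fun u hu => imp_congr_right fun _ => h u (hV hu)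

theorem counting_upper_bound_rectangle_general {κ b xl xr tl tr : ℝ} (hκ : 0 < κ) (hb : b ≠ 0)
    (hx : xl < xr) (ht : tl < tr) (p μ : ℝ) :
    (NN (landauEnergy κ p b) {w | IsTestOn (Set.Ioo xl xr ×ˢ Set.Ioo tl tr) w}
      (fun w => ∫ q, ‖w q‖ ^ 2) μ : ℝ) ≤
      (xr - xl) * (tr - tl) * |b| / (2 * π * κ) *
        ∑' k : ℕ, heav (μ - (2 * (k : ℝ) + 1) * |b|) := by
  obtain ⟨M, hsum, hM⟩ := exists_tsum_heav_eq_natCast μ (abs_pos.2 hb)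
  have := sub_pos.2 hx
  have := sub_pos.2 ht
  rw [hsum]
  exact NN_le_of_forall_finrank_le (by positivity) fun V hfin htest hlt =>
    IsTrialSpace.finrank_le_flux_mul hκ hx hb ht.le ⟨hfin, htest, hlt⟩ hM

end CountingFunction

section FrozenField

variable {x₀ t₀ a ε₀ : ℝ} {w : ℝ × ℝ → ℂ}

lemma setIntegral_norm_sq_eq_integral_of_isTestOn {Ω : Set (ℝ × ℝ)} (hw : IsTestOn Ω w) :
    ∫ q in Ω, ‖w q‖ ^ 2 = ∫ q, ‖w q‖ ^ 2 :=
  setIntegral_eq_integral_of_forall_compl_eq_zero fun q hq => by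
    simp [image_eq_zero_of_notMem_tsupport fun h => hq (hw.2.2 h)]

lemma exp_two_mul_mul_norm_sub_Azero_sq (t₀ b₀ : ℝ) (w : ℝ × ℝ → ℂ) (q : ℝ × ℝ) :
    Real.exp (2 * t₀) * ‖-Complex.I * dX w q - (Azero t₀ b₀ q : ℂ) * w q‖ ^ 2 =
      ‖kineticMomentum (Real.exp t₀) (-(b₀ * t₀)) b₀ w q‖ ^ 2 := by
  have hscale : Real.exp t₀ * Azero t₀ b₀ q = -(-(b₀ * t₀) + b₀ * q.2) := by
    rw [Azero, Real.exp_neg]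
    field_simp [Real.exp_ne_zero]
    ring
  have hmom : kineticMomentum (Real.exp t₀) (-(b₀ * t₀)) b₀ w q =
      (Real.exp t₀ : ℂ) * (-Complex.I * dX w q - (Azero t₀ b₀ q : ℂ) * w q) := by
    rw [mul_sub, ← mul_assoc (Real.exp t₀ : ℂ) (Azero t₀ b₀ q : ℂ), ← Complex.ofReal_mul, hscale,
      kineticMomentum, Complex.real_smul]
    push_cast
    ring
  rw [hmom, norm_mul, mul_pow, Complex.norm_real, norm_eq_abs, sq_abs, two_mul,
    Real.exp_add, ← sq]

lemma qK0_eq_landauEnergy_add (b₀ : ℝ) (hw : IsTestOn (Krect x₀ t₀ a ε₀) w) :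
    qK0 x₀ t₀ a ε₀ b₀ w =
      landauEnergy (Real.exp t₀) (-(b₀ * t₀)) b₀ w + 1 / 4 * ∫ q, ‖w q‖ ^ 2 := by
  have hzero : ∀ q ∉ Krect x₀ t₀ a ε₀, w q = 0 ∧ fderiv ℝ w q = 0 := fun q hq =>
    ⟨image_eq_zero_of_notMem_tsupport fun h => hq (hw.2.2 h),
      image_eq_zero_of_notMem_tsupport fun h => hq (hw.2.2 (tsupport_fderiv_subset ℝ h))⟩
  rw [qK0, setIntegral_eq_integral_of_forall_compl_eq_zero fun q hq => by
    simp [dX, dY, hzero q hq], landauEnergy, ← integral_const_mul, ← integral_add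
    (integrable_landauEnergy _ _ _ hw.contDiff_one hw.2.1)
    ((integrable_norm_sq_of_hasCompactSupport hw.1.continuous hw.2.1).const_mul _)]
  simp only [exp_two_mul_mul_norm_sub_Azero_sq]

lemma NK0_eq_NN_landauEnergy (x₀ t₀ a ε₀ b₀ lam : ℝ) :
    NK0 x₀ t₀ a ε₀ b₀ lam =
      NN (landauEnergy (Real.exp t₀) (-(b₀ * t₀)) b₀) {w | IsTestOn (Krect x₀ t₀ a ε₀) w}
        (fun w => ∫ q, ‖w q‖ ^ 2) (lam - 1 / 4) :=
  NN_congr fun w hw => by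
    rw [qK0_eq_landauEnergy_add b₀ hw, setIntegral_norm_sq_eq_integral_of_isTestOn hw, sub_mul,
      lt_sub_iff_add_lt]

end FrozenField

/-- upper bound for the counting function of `q^{A⁰,0}_K`. -/
theorem counting_upper_bound_rectangle
    (a₀ a ε₀ x₀ t₀ b₀ : ℝ) (ha₀ : 1 < a₀) (ha : 1 / a₀ < a) (ha' : a ≤ a₀)
    (hε₀ : 0 < ε₀) (hε₀' : ε₀ < 1) (hb₀ : b₀ ≠ 0) (lam : ℝ) :
    (NK0 x₀ t₀ a ε₀ b₀ lam : ℝ) ≤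
      (a * ε₀ ^ 2 * Real.exp t₀) * |b₀| / (2 * π * Real.exp t₀) *
        ∑' k : ℕ, heav (lam - 1/4 - (2 * (k : ℝ) + 1) * |b₀|) := by
  have ha_pos : 0 < a := (one_div_pos.2 (one_pos.trans ha₀)).trans ha
  have hwidth : 0 < ε₀ * a * Real.exp t₀ := by positivity
  have harea : a * ε₀ ^ 2 * Real.exp t₀ =
      (x₀ + ε₀ * a * Real.exp t₀ / 2 - (x₀ - ε₀ * a * Real.exp t₀ / 2)) *
        (t₀ + ε₀ / 2 - (t₀ - ε₀ / 2)) := by ring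
  rw [NK0_eq_NN_landauEnergy, harea]
  exact counting_upper_bound_rectangle_general (Real.exp_pos t₀) hb₀ (by linarith) (by linarith) _ _
end
end
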